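/- Let β ∈ [1,2). For every ε > 0 there exists K ∈ ℕ such that for every k ≥ K with n := β·2^k ∈ ℕ, one has 2^{(G(β)−ε)·n} ≤ ρ_min(n) ≤ 2^{(G(β)+ε)·n}. (That is, ρ_min(n) = 2^{G(β)·n ± o(n)} along the sequence n = β·2^k.) -/

import Mathlib

/-- The binary entropy function, `h(p) = p log₂(1/p) + (1-p) log₂(1/(1-p))`,
with the convention `h(0) = h(1) = 0` (automatic since `1/0 = 0` and `logb 2 0 = 0`). -/
noncomputable def binH (p : ℝ) : ℝ :=
  p * Real.logb 2 (1 / p) + (1 - p) * Real.logb 2 (1 / (1 - p))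

/-- `(c, b) ∈ C(β)`: `c : ℕ → [0,1]`, `∑ cᵢ/2ⁱ = 1/(β·2ᵇ)` and `∑ cᵢ ≤ 1`
(the latter expressed via partial sums, which is equivalent for nonnegative terms). -/
def memC (β : ℝ) (c : ℕ → ℝ) (b : ℕ) : Prop :=
  (∀ i, c i ∈ Set.Icc (0 : ℝ) 1) ∧
  (∑' i : ℕ, c i / 2 ^ i) = 1 / (β * 2 ^ b) ∧
  ∀ n : ℕ, (∑ i ∈ Finset.range n, c i) ≤ 1

/-- `α ∈ A(c,b)`: `α : ℕ → [0,1]` with `∑ αᵢ cᵢ / 2ⁱ = 1/(β·2^{b+1})`. -/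
def memA (β : ℝ) (b : ℕ) (c α : ℕ → ℝ) : Prop :=
  (∀ i, α i ∈ Set.Icc (0 : ℝ) 1) ∧
  (∑' i : ℕ, α i * c i / 2 ^ i) = 1 / (β * 2 ^ (b + 1))

/-- `P(c,α) = ∑ h(αᵢ)·cᵢ − h(∑ αᵢ·cᵢ)`. -/
noncomputable def Pfun (c α : ℕ → ℝ) : ℝ :=
  (∑' i : ℕ, binH (α i) * c i) - binH (∑' i : ℕ, α i * c i)

/-- `sup_{α ∈ A(c,b)} P(c,α)`. -/
noncomputable def supP (β : ℝ) (b : ℕ) (c : ℕ → ℝ) : ℝ :=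
  sSup {y | ∃ α, memA β b c α ∧ y = Pfun c α}

/-- `G(β) = inf_{(c,b) ∈ C(β)} sup_{α ∈ A(c,b)} P(c,α)`. -/
noncomputable def Gfun (β : ℝ) : ℝ :=
  sInf {y | ∃ c b, memC β c b ∧ y = supP β b c}

/-- A dyadic distribution on `X_n`: nonnegative, sums to 1, each value `0` or `2^{-k}`, `k ≥ 1`. -/
def IsDyadicDist (n : ℕ) (μ : Fin n → ℝ) : Prop :=
  (∀ i, 0 ≤ μ i) ∧ (∑ i, μ i) = 1 ∧
  ∀ i, μ i = 0 ∨ ∃ k : ℕ, 1 ≤ k ∧ μ i = ((2 : ℝ) ^ k)⁻¹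

/-- `ρ_i(Spl(μ)) = |Spl(μ)_i| / C(n,i)`. -/
noncomputable def splRatio (n : ℕ) (μ : Fin n → ℝ) (i : ℕ) : ℝ :=
  (({A : Finset (Fin n) | A.card = i ∧ (∑ x ∈ A, μ x) = 1 / 2}.ncard : ℝ)) / (n.choose i)

/-- `ρ(Spl(μ)) = max_{1 ≤ i ≤ n-1} ρ_i(Spl(μ))`. -/
noncomputable def rhoSpl (n : ℕ) (μ : Fin n → ℝ) : ℝ :=
  sSup {r | ∃ i : ℕ, 1 ≤ i ∧ i ≤ n - 1 ∧ r = splRatio n μ i}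

/-- `ρ_min(n)`: minimum of `ρ(Spl(μ))` over non-constant, full-support dyadic `μ` on `X_n`. -/
noncomputable def rhoMin (n : ℕ) : ℝ :=
  sInf {r | ∃ μ : Fin n → ℝ, IsDyadicDist n μ ∧ (∀ i, 0 < μ i) ∧
    (∃ i j, μ i ≠ μ j) ∧ r = rhoSpl n μ}

section BinaryEntropy

theorem binH_eq_binEntropy_div (p : ℝ) : binH p = Real.binEntropy p / Real.log 2 := by
  simp only [binH, Real.binEntropy, Real.logb, one_div]
  ring

@[simp] theorem binH_zero : binH 0 = 0 := by simp [binH]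

@[simp] theorem binH_one : binH 1 = 0 := by simp [binH]

theorem binH_nonneg {p : ℝ} (hp : p ∈ Set.Icc (0 : ℝ) 1) : 0 ≤ binH p := by
  rw [binH_eq_binEntropy_div]
  exact div_nonneg (Real.binEntropy_nonneg hp.1 hp.2) (Real.log_nonneg one_le_two)

theorem binH_le_one (p : ℝ) : binH p ≤ 1 := by
  rw [binH_eq_binEntropy_div, div_le_one (Real.log_pos one_lt_two)]
  exact Real.binEntropy_le_log_two

theorem continuous_binH : Continuous binH := by
  have : binH = fun p => Real.binEntropy p / Real.log 2 := funext binH_eq_binEntropy_div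
  rw [this]
  exact Real.binEntropy_continuous.div_const _

theorem concaveOn_binH : ConcaveOn ℝ (Set.Icc 0 1) binH := by
  have h := Real.strictConcave_binEntropy.concaveOn.smul
    (inv_nonneg.2 (Real.log_nonneg one_le_two))
  refine h.congr fun p _ => ?_
  simp [binH_eq_binEntropy_div, div_eq_inv_mul]

theorem exists_modulus_binH {ε : ℝ} (hε : 0 < ε) :
    ∃ δ > 0, ∀ x ∈ Set.Icc (0 : ℝ) 1, ∀ y ∈ Set.Icc (0 : ℝ) 1,
      |x - y| ≤ δ → |binH x - binH y| ≤ ε := by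
  have h := isCompact_Icc.uniformContinuousOn_of_continuous
    (s := Set.Icc (0 : ℝ) 1) continuous_binH.continuousOn
  obtain ⟨δ, hδ, h⟩ := Metric.uniformContinuousOn_iff.1 h ε hε
  refine ⟨δ / 2, half_pos hδ, fun x hx y hy hxy => ?_⟩
  have := h x hx y hy (by rw [Real.dist_eq]; linarith)
  rw [Real.dist_eq] at this
  exact this.le

/-- The defect of homogeneity of the entropy, `p ↦ h(s p) - s h(p)`, is convex. -/
theorem convexOn_binH_mul_sub {s : ℝ} (hs₀ : 0 < s) (hs₁ : s ≤ 1) :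
    ConvexOn ℝ (Set.Icc 0 1) fun p => binH (s * p) - s * binH p := by
  have hlog : 0 < Real.log 2 := Real.log_pos one_lt_two
  have hder : ∀ p ∈ Set.Ioo (0 : ℝ) 1, HasDerivAt
      (fun p => Real.binEntropy (s * p) - s * Real.binEntropy p)
      ((Real.log (1 - s * p) - Real.log (s * p)) * s
        - s * (Real.log (1 - p) - Real.log p)) p := by
    intro p hp
    have hsp : 0 < s * p := mul_pos hs₀ hp.1
    have hsp' : s * p < 1 := by nlinarith [hp.1, hp.2]
    have h1 : HasDerivAt (fun p => s * p) s p := by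
      simpa using (hasDerivAt_id p).const_mul s
    have h2 := Real.hasDerivAt_binEntropy hsp.ne' hsp'.ne
    have h3 := Real.hasDerivAt_binEntropy hp.1.ne' hp.2.ne
    exact (h2.comp p h1).sub (h3.const_mul s)
  have hconv : ConvexOn ℝ (Set.Icc 0 1)
      fun p => Real.binEntropy (s * p) - s * Real.binEntropy p := by
    refine MonotoneOn.convexOn_of_deriv (convex_Icc 0 1) (by fun_prop) ?_ ?_
    · rw [interior_Icc]
      exact fun p hp => (hder p hp).differentiableAt.differentiableWithinAt
    · rw [interior_Icc]
      intro p hp q hq hpq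
      rw [(hder p hp).deriv, (hder q hq).deriv]
      have key : ∀ r ∈ Set.Ioo (0 : ℝ) 1,
          (Real.log (1 - s * r) - Real.log (s * r)) * s - s * (Real.log (1 - r) - Real.log r)
            = s * (Real.log ((1 - s * r) / (1 - r)) - Real.log s) := by
        intro r hr
        have h1 : 0 < 1 - s * r := by nlinarith [hr.1, hr.2]
        have h2 : 0 < 1 - r := by linarith [hr.2]
        rw [Real.log_div h1.ne' h2.ne', Real.log_mul hs₀.ne' hr.1.ne']
        ring
      rw [key p hp, key q hq]
      have hp2 : 0 < 1 - p := by linarith [hp.2]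
      have hq2 : 0 < 1 - q := by linarith [hq.2]
      have hp1 : 0 < 1 - s * p := by nlinarith [hp.1, hp.2]
      have : (1 - s * p) / (1 - p) ≤ (1 - s * q) / (1 - q) := by
        rw [div_le_div_iff₀ hp2 hq2]
        nlinarith
      have := Real.log_le_log (div_pos hp1 hp2) this
      nlinarith
  refine (hconv.smul (inv_nonneg.2 hlog.le)).congr fun p _ => ?_
  simp only [binH_eq_binEntropy_div, smul_eq_mul]
  field_simp

theorem ConvexOn.map_sum_le_of_sum_le_one {ι : Type*} {g : ℝ → ℝ}
    (hg : ConvexOn ℝ (Set.Icc 0 1) g) (hg₀ : g 0 = 0) {G : Finset ι} {c α : ι → ℝ}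
    (hc : ∀ i ∈ G, 0 ≤ c i) (hc₁ : ∑ i ∈ G, c i ≤ 1)
    (hα : ∀ i ∈ G, α i ∈ Set.Icc (0 : ℝ) 1) :
    g (∑ i ∈ G, c i * α i) ≤ ∑ i ∈ G, c i * g (α i) := by
  have := hg.map_add_sum_le (v := 1 - ∑ i ∈ G, c i) (q := 0) hc (by ring) hα
    (by linarith) (by simp)
  simpa [hg₀] using this

theorem sum_mul_mem_Icc {ι : Type*} {G : Finset ι} {c α : ι → ℝ}
    (hc : ∀ i ∈ G, 0 ≤ c i) (hc₁ : ∑ i ∈ G, c i ≤ 1)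
    (hα : ∀ i ∈ G, α i ∈ Set.Icc (0 : ℝ) 1) :
    ∑ i ∈ G, c i * α i ∈ Set.Icc (0 : ℝ) 1 := by
  refine ⟨Finset.sum_nonneg fun i hi => mul_nonneg (hc i hi) (hα i hi).1, le_trans ?_ hc₁⟩
  exact Finset.sum_le_sum fun i hi => mul_le_of_le_one_right (hc i hi) (hα i hi).2

/-- The entropy gap `∑ cᵢ h(αᵢ) - h(∑ cᵢ αᵢ)` over a finite index set. -/
noncomputable def entropyGap {ι : Type*} (G : Finset ι) (c α : ι → ℝ) : ℝ :=
  ∑ i ∈ G, c i * binH (α i) - binH (∑ i ∈ G, c i * α i)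

theorem entropyGap_nonpos {ι : Type*} {G : Finset ι} {c α : ι → ℝ}
    (hc : ∀ i ∈ G, 0 ≤ c i) (hc₁ : ∑ i ∈ G, c i ≤ 1)
    (hα : ∀ i ∈ G, α i ∈ Set.Icc (0 : ℝ) 1) : entropyGap G c α ≤ 0 := by
  have := concaveOn_binH.neg.map_sum_le_of_sum_le_one (by simp) hc hc₁ hα
  simp only [Pi.neg_apply, mul_neg, Finset.sum_neg_distrib] at this
  unfold entropyGap
  linarith

/-- Shrinking all the proportions by a common factor increases the entropy gap. -/
theorem entropyGap_le_entropyGap_mul {ι : Type*} {G : Finset ι} {c α : ι → ℝ} {s : ℝ}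
    (hs : s ∈ Set.Icc (0 : ℝ) 1) (hc : ∀ i ∈ G, 0 ≤ c i) (hc₁ : ∑ i ∈ G, c i ≤ 1)
    (hα : ∀ i ∈ G, α i ∈ Set.Icc (0 : ℝ) 1) :
    entropyGap G c α ≤ entropyGap G c fun i => s * α i := by
  have hnonpos := entropyGap_nonpos hc hc₁ hα
  rcases hs.1.eq_or_lt with rfl | hs₀
  · simpa [entropyGap] using hnonpos
  have h := (convexOn_binH_mul_sub hs₀ hs.2).map_sum_le_of_sum_le_one (by simp) hc hc₁ hα
  have hscale : s * entropyGap G c α ≤ entropyGap G c fun i => s * α i := by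
    unfold entropyGap
    simp only [mul_sub, Finset.sum_sub_distrib, Finset.mul_sum, mul_left_comm _ s] at h ⊢
    linarith
  nlinarith [hs.2]

theorem abs_sum_mul_sub_sum_mul_le {ι : Type*} {G : Finset ι} {c f g : ι → ℝ} {δ : ℝ}
    (hδ : 0 ≤ δ) (hc : ∀ i ∈ G, 0 ≤ c i) (hc₁ : ∑ i ∈ G, c i ≤ 1)
    (h : ∀ i ∈ G, |f i - g i| ≤ δ) :
    |∑ i ∈ G, c i * f i - ∑ i ∈ G, c i * g i| ≤ δ := by
  rw [← Finset.sum_sub_distrib]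
  calc |∑ i ∈ G, (c i * f i - c i * g i)| ≤ ∑ i ∈ G, |c i * f i - c i * g i| :=
        Finset.abs_sum_le_sum_abs _ _
    _ ≤ ∑ i ∈ G, c i * δ := by
        refine Finset.sum_le_sum fun i hi => ?_
        rw [← mul_sub, abs_mul, abs_of_nonneg (hc i hi)]
        exact mul_le_mul_of_nonneg_left (h i hi) (hc i hi)
    _ = (∑ i ∈ G, c i) * δ := by rw [Finset.sum_mul]
    _ ≤ δ := mul_le_of_le_one_left hδ hc₁

theorem entropyGap_sub_le {ι : Type*} {G : Finset ι} {c α α' : ι → ℝ} {ε δ : ℝ}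
    (hδ : 0 ≤ δ) (hε : 0 ≤ ε)
    (hmod : ∀ x ∈ Set.Icc (0 : ℝ) 1, ∀ y ∈ Set.Icc (0 : ℝ) 1,
      |x - y| ≤ δ → |binH x - binH y| ≤ ε)
    (hc : ∀ i ∈ G, 0 ≤ c i) (hc₁ : ∑ i ∈ G, c i ≤ 1)
    (hα : ∀ i ∈ G, α i ∈ Set.Icc (0 : ℝ) 1) (hα' : ∀ i ∈ G, α' i ∈ Set.Icc (0 : ℝ) 1)
    (h : ∀ i ∈ G, |α i - α' i| ≤ δ) :
    entropyGap G c α - 2 * ε ≤ entropyGap G c α' := by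
  have h1 := abs_sum_mul_sub_sum_mul_le hε hc hc₁
    fun i hi => hmod _ (hα i hi) _ (hα' i hi) (h i hi)
  have h2 := hmod _ (sum_mul_mem_Icc hc hc₁ hα) _ (sum_mul_mem_Icc hc hc₁ hα')
    (abs_sum_mul_sub_sum_mul_le hδ hc hc₁ h)
  have h3 := abs_le.1 h1
  have h4 := abs_le.1 h2
  unfold entropyGap
  linarith [h3.1, h3.2, h4.1, h4.2]

end BinaryEntropy

section Binomial

theorem choose_mul_pow_mul_pow_le {N y : ℕ} (hy : y ≤ N) (j : ℕ) :
    N.choose j * y ^ j * (N - y) ^ (N - j) ≤ N.choose y * y ^ y * (N - y) ^ (N - y) := by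
  have step : ∀ i < N, (N.choose i * y ^ i * (N - y) ^ (N - i)) * ((N - i) * y)
      = (N.choose (i + 1) * y ^ (i + 1) * (N - y) ^ (N - (i + 1))) * ((i + 1) * (N - y)) := by
    intro i hi
    have e : N - i = (N - (i + 1)) + 1 := by omega
    calc (N.choose i * y ^ i * (N - y) ^ (N - i)) * ((N - i) * y)
        = (N.choose i * (N - i)) * y ^ (i + 1) * (N - y) ^ (N - i) := by ring
      _ = (N.choose (i + 1) * (i + 1)) * y ^ (i + 1) * (N - y) ^ (N - i) := by
          rw [Nat.choose_succ_right_eq]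
      _ = _ := by rw [e, pow_succ (N - y)]; ring
  rcases le_or_gt j N with hj | hj
  swap
  · simp [Nat.choose_eq_zero_of_lt hj]
  rcases le_total j y with hjy | hjy
  · refine Nat.decreasingInduction' (P := fun j => N.choose j * y ^ j * (N - y) ^ (N - j)
      ≤ N.choose y * y ^ y * (N - y) ^ (N - y)) ?_ hjy le_rfl
    intro i hiy _ ih
    refine le_trans ?_ ih
    have hpos : 0 < (N - i) * y := Nat.mul_pos (by omega) (by omega)
    refine Nat.le_of_mul_le_mul_right ?_ hpos
    rw [step i (by omega)]
    refine Nat.mul_le_mul_left _ ?_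
    zify [hy, hiy.le.trans hy]
    nlinarith
  · induction j, hjy using Nat.le_induction with
    | base => exact le_rfl
    | succ i hyi ih =>
      refine le_trans ?_ (ih (by omega))
      have hpos : 0 < (i + 1) * (N - y) := Nat.mul_pos (by omega) (by omega)
      refine Nat.le_of_mul_le_mul_right ?_ hpos
      rw [← step i (by omega)]
      refine Nat.mul_le_mul_left _ ?_
      have : i ≤ N := by omega
      zify [hy, this]
      nlinarith

theorem two_rpow_mul_binH {N y : ℕ} (hy : y ≤ N) :
    (2 : ℝ) ^ (N * binH (y / N)) * ((y : ℝ) ^ y * ((N - y : ℕ) : ℝ) ^ (N - y)) = (N : ℝ) ^ N := by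
  rcases Nat.eq_zero_or_pos N with rfl | hN
  · obtain rfl : y = 0 := by omega
    simp
  rcases Nat.eq_zero_or_pos y with rfl | hy0
  · simp
  rcases hy.eq_or_lt with rfl | hyN
  · have : (y : ℝ) ≠ 0 := by positivity
    simp [div_self this]
  have hN' : (0 : ℝ) < N := by exact_mod_cast hN
  have hy' : (0 : ℝ) < y := by exact_mod_cast hy0
  have hz' : (0 : ℝ) < ((N - y : ℕ) : ℝ) := by exact_mod_cast Nat.sub_pos_of_lt hyN
  have hz : ((N - y : ℕ) : ℝ) = N - y := by push_cast [hy]; ring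
  have hlog : Real.log 2 ≠ 0 := (Real.log_pos one_lt_two).ne'
  refine Real.log_injOn_pos (Set.mem_Ioi.2 (by positivity)) (Set.mem_Ioi.2 (by positivity)) ?_
  rw [Real.log_mul (by positivity) (by positivity), Real.log_mul (by positivity) (by positivity),
    Real.log_rpow two_pos, Real.log_pow, Real.log_pow, Real.log_pow, binH_eq_binEntropy_div,
    Real.binEntropy, one_sub_div hN'.ne', ← hz, inv_div, inv_div,
    Real.log_div hN'.ne' hy'.ne', Real.log_div hN'.ne' hz'.ne']
  field_simp
  rw [hz]
  ring

theorem choose_le_two_rpow {N y : ℕ} (hy : y ≤ N) :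
    (N.choose y : ℝ) ≤ (2 : ℝ) ^ (N * binH (y / N)) := by
  have hpos : (0 : ℝ) < (y : ℝ) ^ y * ((N - y : ℕ) : ℝ) ^ (N - y) := by
    have h1 : (0 : ℝ) < (y : ℝ) ^ y := by exact_mod_cast Nat.pow_self_pos
    have h2 : (0 : ℝ) < ((N - y : ℕ) : ℝ) ^ (N - y) := by exact_mod_cast Nat.pow_self_pos
    positivity
  refine le_of_mul_le_mul_right ?_ hpos
  rw [two_rpow_mul_binH hy]
  have h : N.choose y * (y ^ y * (N - y) ^ (N - y)) ≤ N ^ N := by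
    conv_rhs => rw [← Nat.add_sub_cancel' hy, add_pow]
    rw [Nat.add_sub_cancel' hy]
    refine le_trans (le_of_eq ?_) (Finset.single_le_sum
      (f := fun m => y ^ m * (N - y) ^ (N - m) * N.choose m) (fun _ _ => Nat.zero_le _)
      (Finset.mem_range.2 (Nat.lt_succ_of_le hy)))
    simp only [mul_comm]
  exact_mod_cast h

theorem two_rpow_le_choose {N y : ℕ} (hy : y ≤ N) :
    (2 : ℝ) ^ (N * binH (y / N)) ≤ (N + 1) * N.choose y := by
  have hpos : (0 : ℝ) < (y : ℝ) ^ y * ((N - y : ℕ) : ℝ) ^ (N - y) := by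
    have h1 : (0 : ℝ) < (y : ℝ) ^ y := by exact_mod_cast Nat.pow_self_pos
    have h2 : (0 : ℝ) < ((N - y : ℕ) : ℝ) ^ (N - y) := by exact_mod_cast Nat.pow_self_pos
    positivity
  refine le_of_mul_le_mul_right ?_ hpos
  rw [two_rpow_mul_binH hy]
  have h : N ^ N ≤ (N + 1) * N.choose y * (y ^ y * (N - y) ^ (N - y)) := by
    conv_lhs => rw [← Nat.add_sub_cancel' hy, add_pow]
    rw [Nat.add_sub_cancel' hy]
    refine (Finset.sum_le_card_nsmul _ _ (N.choose y * y ^ y * (N - y) ^ (N - y)) ?_).trans ?_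
    · intro j _
      refine le_trans (le_of_eq ?_) (choose_mul_pow_mul_pow_le hy j)
      rw [Nat.cast_id]
      ring
    · simp [mul_assoc]
  exact_mod_cast h

end Binomial

section Feasible

variable {β : ℝ} {b : ℕ} {c α : ℕ → ℝ}

theorem memC.summable (h : memC β c b) : Summable c :=
  summable_of_sum_range_le (fun i => (h.1 i).1) h.2.2

theorem memC.tsum_le_one (h : memC β c b) : ∑' i, c i ≤ 1 :=
  h.summable.tsum_le_of_sum_range_le h.2.2

theorem memC.summable_mul (h : memC β c b) {f : ℕ → ℝ} (hf : ∀ i, f i ∈ Set.Icc (0 : ℝ) 1) :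
    Summable fun i => f i * c i :=
  h.summable.of_nonneg_of_le (fun i => mul_nonneg (hf i).1 (h.1 i).1)
    fun i => mul_le_of_le_one_left (h.1 i).1 (hf i).2

theorem memC.tsum_mul_mem_Icc (h : memC β c b) {f : ℕ → ℝ}
    (hf : ∀ i, f i ∈ Set.Icc (0 : ℝ) 1) : ∑' i, f i * c i ∈ Set.Icc (0 : ℝ) 1 :=
  ⟨tsum_nonneg fun i => mul_nonneg (hf i).1 (h.1 i).1,
    ((h.summable_mul hf).tsum_le_tsum (fun i => mul_le_of_le_one_left (h.1 i).1 (hf i).2)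
      h.summable).trans h.tsum_le_one⟩

theorem one_div_two_pow_mem_Icc (i : ℕ) : 1 / (2 : ℝ) ^ i ∈ Set.Icc (0 : ℝ) 1 :=
  ⟨by positivity, by
    rw [div_le_one (by positivity)]
    exact one_le_pow₀ one_le_two⟩

theorem memC.summable_mul_div (h : memC β c b) {f : ℕ → ℝ}
    (hf : ∀ i, f i ∈ Set.Icc (0 : ℝ) 1) : Summable fun i => f i * c i / 2 ^ i := by
  have := h.summable_mul (f := fun i => f i * (1 / 2 ^ i)) fun i =>
    ⟨mul_nonneg (hf i).1 (one_div_two_pow_mem_Icc i).1,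
      mul_le_one₀ (hf i).2 (one_div_two_pow_mem_Icc i).1 (one_div_two_pow_mem_Icc i).2⟩
  refine this.congr fun i => ?_
  ring

theorem memC.summable_div (h : memC β c b) : Summable fun i => c i / 2 ^ i := by
  simpa using h.summable_mul_div (f := fun _ => 1) (by simp)

theorem binH_mem_Icc {p : ℝ} (hp : p ∈ Set.Icc (0 : ℝ) 1) : binH p ∈ Set.Icc (0 : ℝ) 1 :=
  ⟨binH_nonneg hp, binH_le_one p⟩

theorem memC.abs_Pfun_le_one (h : memC β c b) (hα : ∀ i, α i ∈ Set.Icc (0 : ℝ) 1) :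
    |Pfun c α| ≤ 1 := by
  have h1 := h.tsum_mul_mem_Icc fun i => binH_mem_Icc (hα i)
  have h2 := binH_mem_Icc (h.tsum_mul_mem_Icc hα)
  unfold Pfun
  rw [abs_le]
  constructor <;> linarith [h1.1, h1.2, h2.1, h2.2]

theorem memC.half_mem (h : memC β c b) : memA β b c fun _ => 1 / 2 := by
  refine ⟨fun _ => by norm_num, ?_⟩
  simp_rw [mul_div_assoc]
  rw [tsum_mul_left, h.2.1, pow_succ]
  field_simp

theorem memC.Pfun_le_supP (h : memC β c b) (hα : memA β b c α) : Pfun c α ≤ supP β b c := by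
  refine le_csSup ⟨1, ?_⟩ ⟨α, hα, rfl⟩
  rintro _ ⟨α, hα, rfl⟩
  exact (abs_le.1 (h.abs_Pfun_le_one hα.1)).2

theorem memC.Gfun_le_supP (h : memC β c b) : Gfun β ≤ supP β b c := by
  refine csInf_le ⟨-1, ?_⟩ ⟨c, b, h, rfl⟩
  rintro _ ⟨c, b, h, rfl⟩
  exact (abs_le.1 (h.abs_Pfun_le_one h.half_mem.1)).1.trans (h.Pfun_le_supP h.half_mem)

theorem memC.exists_Gfun_sub_lt_Pfun (h : memC β c b) {ε : ℝ} (hε : 0 < ε) :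
    ∃ α, memA β b c α ∧ Gfun β - ε < Pfun c α := by
  have hlt : Gfun β - ε < supP β b c := by linarith [h.Gfun_le_supP]
  obtain ⟨_, ⟨α, hα, rfl⟩, hlt⟩ := exists_lt_of_lt_csSup
    (s := {y | ∃ α, memA β b c α ∧ y = Pfun c α}) ⟨_, _, h.half_mem, rfl⟩ hlt
  exact ⟨α, hα, hlt⟩

theorem exists_supP_lt_Gfun_add (hβ : 1 ≤ β) {ε : ℝ} (hε : 0 < ε) :
    ∃ c b, memC β c b ∧ supP β b c < Gfun β + ε := by
  have hβ₀ : 0 < β := by linarith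
  have hne : {y | ∃ c b, memC β c b ∧ y = supP β b c}.Nonempty := by
    refine ⟨_, fun i => if i = 0 then 1 / β else 0, 0, ⟨fun i => ?_, ?_, fun n => ?_⟩, rfl⟩
    · have : β⁻¹ ≤ 1 := inv_le_one_of_one_le₀ hβ
      dsimp only
      split_ifs <;> simp [hβ₀.le, this]
    · rw [tsum_eq_single 0 (by simp +contextual)]
      simp
    · have : β⁻¹ ≤ 1 := inv_le_one_of_one_le₀ hβ
      rw [Finset.sum_ite_eq']
      split_ifs <;> simp [this]
  obtain ⟨_, ⟨c, b, h, rfl⟩, hlt⟩ := exists_lt_of_csInf_lt (b := Gfun β + ε) hne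
    (by change Gfun β < _; linarith)
  exact ⟨c, b, h, hlt⟩

/-- A sequence shifted by one place, with a leading zero. -/
def shiftSeq (c : ℕ → ℝ) : ℕ → ℝ
  | 0 => 0
  | i + 1 => c i

theorem memC.shiftSeq (h : memC β c b) : memC β (shiftSeq c) (b + 1) := by
  refine ⟨fun i => ?_, ?_, fun n => ?_⟩
  · cases i
    · simp [_root_.shiftSeq]
    · exact h.1 _
  · have hs : Summable fun i => _root_.shiftSeq c i / 2 ^ i := by
      rw [← summable_nat_add_iff 1]
      refine (h.summable_div.mul_left (1 / 2)).congr fun i => ?_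
      simp only [_root_.shiftSeq, pow_succ]
      ring
    rw [hs.tsum_eq_zero_add]
    have : ∀ i, _root_.shiftSeq c (i + 1) / 2 ^ (i + 1) = 1 / 2 * (c i / 2 ^ i) := fun i => by
      simp only [_root_.shiftSeq, pow_succ]
      ring
    simp_rw [this]
    rw [tsum_mul_left, h.2.1, pow_succ]
    simp only [_root_.shiftSeq]
    ring
  · cases n with
    | zero => simp
    | succ n =>
      rw [Finset.sum_range_succ']
      simpa [_root_.shiftSeq] using h.2.2 n

theorem memC.supP_shiftSeq_le (h : memC β c b) :
    supP β (b + 1) (_root_.shiftSeq c) ≤ supP β b c := by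
  refine csSup_le ⟨_, _, h.shiftSeq.half_mem, rfl⟩ ?_
  rintro _ ⟨α, hα, rfl⟩
  have hmem : memA β b c fun i => α (i + 1) := by
    refine ⟨fun i => hα.1 _, ?_⟩
    have h2 := hα.2
    rw [(h.shiftSeq.summable_mul_div hα.1).tsum_eq_zero_add] at h2
    have : ∀ i, α (i + 1) * _root_.shiftSeq c (i + 1) / 2 ^ (i + 1)
        = 1 / 2 * (α (i + 1) * c i / 2 ^ i) := fun i => by
      simp only [_root_.shiftSeq, pow_succ]
      ring
    simp_rw [this] at h2
    rw [tsum_mul_left] at h2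
    simp only [_root_.shiftSeq, mul_zero, zero_div, zero_add] at h2
    rw [pow_succ, mul_comm _ (2 : ℝ), mul_left_comm, ← div_div] at h2
    have : (1 : ℝ) / 2 / (β * 2 ^ (b + 1)) = 1 / 2 * (1 / (β * 2 ^ (b + 1))) := by ring
    dsimp only
    linarith
  have e : Pfun (_root_.shiftSeq c) α = Pfun c fun i => α (i + 1) := by
    unfold Pfun
    rw [(h.shiftSeq.summable_mul fun i => binH_mem_Icc (hα.1 i)).tsum_eq_zero_add,
      (h.shiftSeq.summable_mul hα.1).tsum_eq_zero_add]
    simp [_root_.shiftSeq]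
  rw [e]
  exact h.Pfun_le_supP hmem

/-- Proportions that nearly halve the total weight can be corrected to ones that halve it. -/
theorem memC.exists_memA_near (h : memC β c b) (hβ : 0 < β) {ν : ℝ}
    (hα : ∀ i, α i ∈ Set.Icc (0 : ℝ) 1)
    (hν : |∑' i, α i * c i / 2 ^ i - 1 / (β * 2 ^ (b + 1))| ≤ ν) :
    ∃ α', memA β b c α' ∧ ∀ i, |α i - α' i| ≤ ν * (β * 2 ^ (b + 1)) := by
  set m := ∑' i, α i * c i / 2 ^ i with hm
  set z := 1 / (β * 2 ^ (b + 1)) with hz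
  have hz₀ : 0 < z := by positivity
  have hzz : β * 2 ^ (b + 1) = z⁻¹ := by rw [hz, one_div, inv_inv]
  have htot : ∑' i, c i / 2 ^ i = 2 * z := by
    rw [h.2.1, hz, pow_succ]
    field_simp
  have hνz : ∀ x, x ≤ ν → x / z ≤ ν * (β * 2 ^ (b + 1)) := fun x hx => by
    rw [hzz, div_eq_mul_inv]
    exact mul_le_mul_of_nonneg_right hx (inv_nonneg.2 hz₀.le)
  have hν' := abs_le.1 hν
  have hsum := h.summable_mul_div hα
  rcases le_total z m with hle | hle
  · have hm₀ : 0 < m := hz₀.trans_le hle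
    have ht : z / m ∈ Set.Icc (0 : ℝ) 1 := ⟨by positivity, (div_le_one hm₀).2 hle⟩
    refine ⟨fun i => z / m * α i, ⟨fun i => ⟨mul_nonneg ht.1 (hα i).1,
      mul_le_one₀ ht.2 (hα i).1 (hα i).2⟩, ?_⟩, fun i => ?_⟩
    · have : ∀ i, z / m * α i * c i / 2 ^ i = z / m * (α i * c i / 2 ^ i) := fun i => by ring
      simp_rw [this]
      rw [tsum_mul_left, ← hm, div_mul_cancel₀ _ hm₀.ne', ← hz]
    · have e : α i - z / m * α i = (m - z) / m * α i := by field_simp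
      have h1 : 0 ≤ (m - z) / m := div_nonneg (by linarith) hm₀.le
      rw [e, abs_of_nonneg (mul_nonneg h1 (hα i).1)]
      calc (m - z) / m * α i ≤ (m - z) / m := mul_le_of_le_one_right h1 (hα i).2
        _ ≤ (m - z) / z := div_le_div_of_nonneg_left (by linarith) hz₀ hle
        _ ≤ _ := hνz _ hν'.2
  · have hd : 0 < 2 * z - m := by linarith
    set t := (z - m) / (2 * z - m) with ht_def
    have ht_mul : t * (2 * z - m) = z - m := div_mul_cancel₀ _ hd.ne'
    have ht : t ∈ Set.Icc (0 : ℝ) 1 :=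
      ⟨div_nonneg (by linarith) hd.le, (div_le_one hd).2 (by linarith)⟩
    refine ⟨fun i => α i + t * (1 - α i), ⟨fun i => ⟨?_, ?_⟩, ?_⟩, fun i => ?_⟩
    · nlinarith [ht.1, (hα i).1, (hα i).2]
    · nlinarith [ht.2, (hα i).1, (hα i).2]
    · have : ∀ i, (α i + t * (1 - α i)) * c i / 2 ^ i
          = (1 - t) * (α i * c i / 2 ^ i) + t * (c i / 2 ^ i) := fun i => by ring
      simp_rw [this]
      rw [(hsum.mul_left _).tsum_add (h.summable_div.mul_left _), tsum_mul_left, tsum_mul_left,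
        htot, ← hm, ← hz]
      linear_combination ht_mul
    · have e : α i - (α i + t * (1 - α i)) = -(t * (1 - α i)) := by ring
      rw [e, abs_neg, abs_of_nonneg (mul_nonneg ht.1 (by linarith [(hα i).2]))]
      calc t * (1 - α i) ≤ t := mul_le_of_le_one_right ht.1 (by linarith [(hα i).1])
        _ ≤ (z - m) / z := div_le_div_of_nonneg_left (by linarith) hz₀ (by linarith)
        _ ≤ _ := hνz _ (by linarith [hν'.1])

/-- The supremum `supP` controls the entropy gap of all nearby finitely supported weights. -/
theorem memC.exists_entropyGap_le_supP_add (h : memC β c b) (hβ : 0 < β) {ε : ℝ} (hε : 0 < ε) :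
    ∃ ν > 0, ∀ (M : ℕ) (c' α : ℕ → ℝ), (∀ i, 0 ≤ c' i) → ∑ i ∈ Finset.range M, c' i ≤ 1 →
      ∑ i ∈ Finset.range M, |c' i - c i| ≤ ν → (∀ i, α i ∈ Set.Icc (0 : ℝ) 1) →
      ∑ i ∈ Finset.range M, α i * c' i / 2 ^ i = 1 / (β * 2 ^ (b + 1)) →
      entropyGap (Finset.range M) c' α ≤ supP β b c + ε := by
  obtain ⟨δ, hδ, hmod⟩ := exists_modulus_binH (ε := ε / 3) (by positivity)
  have hB : 0 < β * 2 ^ (b + 1) := by positivity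
  refine ⟨min (ε / 3) (min (δ / (β * 2 ^ (b + 1))) δ / 2), by positivity, ?_⟩
  intro M c' α hc' hc'₁ hcc' hα hmass
  set ν := min (ε / 3) (min (δ / (β * 2 ^ (b + 1))) δ / 2) with hν
  have hν₀ : 0 < ν := by positivity
  have hνε : ν ≤ ε / 3 := min_le_left _ _
  have hν1 : ν ≤ min (δ / (β * 2 ^ (b + 1))) δ / 2 := min_le_right _ _
  have hν2 : 2 * ν ≤ δ := by linarith [min_le_right (δ / (β * 2 ^ (b + 1))) δ]
  have hν3 : 2 * (ν * (β * 2 ^ (b + 1))) ≤ δ := by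
    have : 2 * ν ≤ δ / (β * 2 ^ (b + 1)) := by linarith [min_le_left (δ / (β * 2 ^ (b + 1))) δ]
    rw [le_div_iff₀ hB] at this
    linarith
  have habs : ∀ f : ℕ → ℝ, (∀ i, f i ∈ Set.Icc (0 : ℝ) 1) →
      |∑ i ∈ Finset.range M, f i * c i - ∑ i ∈ Finset.range M, f i * c' i| ≤ ν := by
    intro f hf
    rw [← Finset.sum_sub_distrib]
    refine (Finset.abs_sum_le_sum_abs _ _).trans (le_trans (Finset.sum_le_sum fun i _ => ?_) hcc')
    rw [← mul_sub, abs_mul, abs_of_nonneg (hf i).1, abs_sub_comm]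
    exact mul_le_of_le_one_left (abs_nonneg _) (hf i).2
  set α₀ : ℕ → ℝ := fun i => if i < M then α i else 0 with hα₀_def
  have hα₀ : ∀ i, α₀ i ∈ Set.Icc (0 : ℝ) 1 := fun i => by
    simp only [hα₀_def]
    split_ifs
    · exact hα i
    · simp
  have hα₀_sum : ∀ g : ℕ → ℝ, ∑' i, α₀ i * g i = ∑ i ∈ Finset.range M, α i * g i := by
    intro g
    rw [tsum_eq_sum (s := Finset.range M) fun i hi => by
      simp only [hα₀_def, if_neg (mt Finset.mem_range.2 hi), zero_mul]]
    exact Finset.sum_congr rfl fun i hi => by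
      simp only [hα₀_def, if_pos (Finset.mem_range.1 hi)]
  obtain ⟨α', hα', hnear⟩ := h.exists_memA_near hβ (ν := ν) hα₀ (by
    have hcomm : ∀ g : ℕ → ℝ, ∑ i ∈ Finset.range M, α i * (g i / 2 ^ i)
        = ∑ i ∈ Finset.range M, α i * (1 / 2 ^ i) * g i := fun g =>
      Finset.sum_congr rfl fun i _ => by ring
    simp_rw [mul_div_assoc] at hmass
    simp_rw [mul_div_assoc]
    rw [hα₀_sum, ← hmass, hcomm, hcomm]
    exact habs (fun i => α i * (1 / 2 ^ i)) fun i =>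
      ⟨mul_nonneg (hα i).1 (one_div_two_pow_mem_Icc i).1,
        mul_le_one₀ (hα i).2 (one_div_two_pow_mem_Icc i).1 (one_div_two_pow_mem_Icc i).2⟩)
  have hnear' : ∀ i, |α₀ i - α' i| ≤ δ := fun i => (hnear i).trans (by
    have : 0 < ν * (β * 2 ^ (b + 1)) := by positivity
    linarith)
  have hP := h.Pfun_le_supP hα'
  have hH : ∑ i ∈ Finset.range M, c' i * binH (α i) - ε / 3 - ν ≤ ∑' i, binH (α' i) * c i := by
    have h1 : ∑ i ∈ Finset.range M, binH (α' i) * c i ≤ ∑' i, binH (α' i) * c i :=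
      (h.summable_mul fun i => binH_mem_Icc (hα'.1 i)).sum_le_tsum _
        fun i _ => mul_nonneg (binH_nonneg (hα'.1 i)) (h.1 i).1
    have h2 := (abs_le.1 (abs_sum_mul_sub_sum_mul_le (G := Finset.range M) (c := c)
      (f := fun i => binH (α i)) (g := fun i => binH (α' i)) (δ := ε / 3) (by positivity)
      (fun i _ => (h.1 i).1) (h.2.2 M) fun i hi => by
        have := hmod _ (hα₀ i) _ (hα'.1 i) (hnear' i)
        simpa only [hα₀_def, if_pos (Finset.mem_range.1 hi)] using this)).2
    have h3 := (abs_le.1 (habs (fun i => binH (α i)) fun i => binH_mem_Icc (hα i))).1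
    simp only [mul_comm (c _), mul_comm (c' _)] at h2 ⊢
    linarith
  have hS : |∑' i, α' i * c i - ∑ i ∈ Finset.range M, c' i * α i| ≤ δ := by
    have h1 : |∑' i, α₀ i * c i - ∑' i, α' i * c i| ≤ ν * (β * 2 ^ (b + 1)) := by
      rw [← (h.summable_mul hα₀).tsum_sub (h.summable_mul hα'.1)]
      have hle : ∀ i, ‖α₀ i * c i - α' i * c i‖ ≤ ν * (β * 2 ^ (b + 1)) * c i := fun i => by
        rw [← sub_mul, norm_mul, Real.norm_eq_abs, Real.norm_eq_abs, abs_of_nonneg (h.1 i).1]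
        exact mul_le_mul_of_nonneg_right (hnear i) (h.1 i).1
      refine (tsum_of_norm_bounded (h.summable.mul_left _).hasSum hle).trans ?_
      rw [tsum_mul_left]
      exact mul_le_of_le_one_right (by positivity) h.tsum_le_one
    have h2 := habs α hα
    rw [hα₀_sum] at h1
    simp only [mul_comm (c' _)]
    rw [abs_le] at h1 h2 ⊢
    constructor <;> linarith [h1.1, h1.2, h2.1, h2.2]
  have hS' := (abs_le.1 (hmod _ (h.tsum_mul_mem_Icc hα'.1) _
    (sum_mul_mem_Icc (fun i _ => hc' i) hc'₁ fun i _ => hα i) hS)).2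
  unfold Pfun at hP
  unfold entropyGap
  linarith

end Feasible

theorem card_eq_sum_range_card_fiber {X : Type*} {lev : X → ℕ} {R : ℕ} (hlev : ∀ x, lev x < R)
    (A : Finset X) : A.card = ∑ i ∈ Finset.range R, (A.filter (lev · = i)).card :=
  Finset.card_eq_sum_card_fiberwise fun x _ => by simpa using hlev x

/-- A sum over a set, grouped by level. -/
theorem sum_eq_sum_range_card_fiber_mul {X : Type*} {lev : X → ℕ} {R : ℕ} (A : Finset X)
    (hlev : ∀ x ∈ A, lev x < R) {μ : X → ℝ} {w : ℕ → ℝ} (hμ : ∀ x ∈ A, μ x = w (lev x)) :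
    ∑ x ∈ A, μ x = ∑ i ∈ Finset.range R, (A.filter (lev · = i)).card * w i := by
  rw [← Finset.sum_fiberwise_of_maps_to (t := Finset.range R) (g := lev)
    fun x hx => by simpa using hlev x hx]
  refine Finset.sum_congr rfl fun i _ => ?_
  rw [Finset.sum_congr rfl fun x hx => by
    rw [hμ x (Finset.mem_filter.1 hx).1, (Finset.mem_filter.1 hx).2], Finset.sum_const,
    nsmul_eq_mul]

section Counting

variable {X : Type*} [Fintype X] [DecidableEq X]

/-- The number of sets meeting each class of a partition in a prescribed number of points. -/
theorem card_filter_forall_card_fiber_eq {ι : Type*} [Fintype ι] [DecidableEq ι] (f : X → ι)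
    (y : ι → ℕ) :
    (Finset.univ.filter fun A : Finset X => ∀ i, (A.filter (f · = i)).card = y i).card
      = ∏ i, (Finset.univ.filter (f · = i)).card.choose (y i) := by
  have : ∏ i, (Finset.univ.filter (f · = i)).card.choose (y i)
      = (Fintype.piFinset fun i =>
        Finset.powersetCard (y i) (Finset.univ.filter (f · = i))).card := by
    simp [Fintype.card_piFinset]
  rw [this]
  refine Finset.card_nbij' (fun A i => A.filter (f · = i))
    (fun g => Finset.univ.filter fun x => x ∈ g (f x)) ?_ ?_ ?_ ?_
  · intro A hA
    simp only [Finset.coe_filter, Finset.mem_univ, true_and, Set.mem_ofPred_eq] at hA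
    simp only [Finset.mem_coe, Fintype.mem_piFinset, Finset.mem_powersetCard]
    exact fun i => ⟨Finset.filter_subset_filter _ (Finset.subset_univ _), hA i⟩
  · intro g hg
    simp only [Finset.mem_coe, Fintype.mem_piFinset, Finset.mem_powersetCard] at hg
    simp only [Finset.coe_filter, Finset.mem_univ, true_and, Set.mem_ofPred_eq]
    intro i
    rw [← (hg i).2]
    congr 1
    ext x
    simp only [Finset.mem_filter, Finset.mem_univ, true_and]
    constructor
    · rintro ⟨h, rfl⟩
      exact h
    · intro h
      have := (Finset.mem_filter.1 ((hg i).1 h)).2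
      exact ⟨this ▸ h, this⟩
  · intro A _
    ext x
    simp
  · intro g hg
    simp only [Finset.mem_coe, Fintype.mem_piFinset, Finset.mem_powersetCard] at hg
    funext i
    ext x
    simp only [Finset.mem_filter, Finset.mem_univ, true_and]
    constructor
    · rintro ⟨h, rfl⟩
      exact h
    · intro h
      have := (Finset.mem_filter.1 ((hg i).1 h)).2
      exact ⟨this ▸ h, this⟩

theorem card_filter_forall_lt_card_fiber_eq {lev : X → ℕ} {R : ℕ} (hlev : ∀ x, lev x < R)
    (y : ℕ → ℕ) :
    (Finset.univ.filter fun A : Finset X => ∀ i < R, (A.filter (lev · = i)).card = y i).card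
      = ∏ i ∈ Finset.range R, (Finset.univ.filter (lev · = i)).card.choose (y i) := by
  have := card_filter_forall_card_fiber_eq (fun x => (⟨lev x, hlev x⟩ : Fin R)) fun i => y i
  simp only [Fin.ext_iff] at this
  rw [Finset.prod_range, ← this]
  simp only [Fin.forall_iff]

/-- A family of sets is small if each of its members has few rearrangements preserving the
intersection numbers with the classes of a partition. -/
theorem card_le_of_forall_prod_choose_le {lev : X → ℕ} {R : ℕ} (hlev : ∀ x, lev x < R)
    (S : Finset (Finset X)) {B : ℝ} (hB₀ : 0 ≤ B)
    (hB : ∀ A ∈ S, ((∏ i ∈ Finset.range R, (Finset.univ.filter (lev · = i)).card.choose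
      (A.filter (lev · = i)).card : ℕ) : ℝ) ≤ B) :
    (S.card : ℝ) ≤ (Fintype.card X + 1) ^ R * B := by
  let F : Finset X → Fin R → ℕ := fun A i => (A.filter (lev · = (i : ℕ))).card
  have h1 : S.card ≤ ⌊B⌋₊ * (S.image F).card := by
    refine Finset.card_le_mul_card_image S _ fun v hv => ?_
    obtain ⟨A, hA, rfl⟩ := Finset.mem_image.1 hv
    refine le_trans ?_ (Nat.le_floor (hB A hA))
    rw [← card_filter_forall_lt_card_fiber_eq hlev]
    refine Finset.card_le_card fun A' hA' => ?_
    simp only [Finset.mem_filter, Finset.mem_univ, true_and] at hA' ⊢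
    exact fun i hi => congrFun hA'.2 ⟨i, hi⟩
  have h2 : (S.image F).card ≤ (Fintype.card X + 1) ^ R := by
    calc (S.image F).card
        ≤ (Fintype.piFinset fun _ : Fin R => Finset.range (Fintype.card X + 1)).card := by
          refine Finset.card_le_card fun v hv => ?_
          obtain ⟨A, _, rfl⟩ := Finset.mem_image.1 hv
          simp only [Fintype.mem_piFinset, Finset.mem_range, Nat.lt_succ_iff]
          exact fun i => Finset.card_le_univ _
      _ = _ := by simp
  calc (S.card : ℝ) ≤ ⌊B⌋₊ * (S.image F).card := by exact_mod_cast h1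
    _ ≤ B * (Fintype.card X + 1) ^ R := by
      refine mul_le_mul (Nat.floor_le hB₀) ?_ (by positivity) hB₀
      exact_mod_cast h2
    _ = _ := mul_comm _ _

end Counting

/-- A product of binomial coefficients compared with a single one, in terms of `entropyGap`. -/
theorem prod_choose_le_two_rpow_mul_choose {R n : ℕ} {N y : ℕ → ℕ} (hn : 0 < n)
    (hy : ∀ i ∈ Finset.range R, y i ≤ N i) (hN : ∑ i ∈ Finset.range R, N i ≤ n) {E : ℝ}
    (hE : entropyGap (Finset.range R) (fun i => (N i : ℝ) / n) (fun i => (y i : ℝ) / N i) ≤ E) :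
    ((∏ i ∈ Finset.range R, (N i).choose (y i) : ℕ) : ℝ)
      ≤ (n + 1) * 2 ^ (n * E) * n.choose (∑ i ∈ Finset.range R, y i) := by
  have hn' : (0 : ℝ) < n := by exact_mod_cast hn
  have hprod : ∀ i ∈ Finset.range R, (N i : ℝ) / n * ((y i : ℝ) / N i) = y i / n := by
    intro i hi
    rcases Nat.eq_zero_or_pos (N i) with h0 | h0
    · have := hy i hi
      simp [h0, show y i = 0 by omega]
    · have : (0 : ℝ) < N i := by exact_mod_cast h0
      field_simp
  have hs : ∑ i ∈ Finset.range R, y i ≤ n := (Finset.sum_le_sum hy).trans hN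
  have h1 := two_rpow_le_choose hs
  unfold entropyGap at hE
  rw [Finset.sum_congr rfl hprod, ← Finset.sum_div, ← Nat.cast_sum] at hE
  set s := ∑ i ∈ Finset.range R, y i with hs_def
  have h2 : ∑ i ∈ Finset.range R, (N i : ℝ) * binH (y i / N i) ≤ n * binH (s / n) + n * E := by
    have : ∑ i ∈ Finset.range R, (N i : ℝ) * binH (y i / N i)
        = n * ∑ i ∈ Finset.range R, (N i : ℝ) / n * binH (y i / N i) := by
      rw [Finset.mul_sum]
      refine Finset.sum_congr rfl fun i _ => ?_
      field_simp
    rw [this, ← mul_add]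
    exact mul_le_mul_of_nonneg_left (by linarith) hn'.le
  calc ((∏ i ∈ Finset.range R, (N i).choose (y i) : ℕ) : ℝ)
      ≤ ∏ i ∈ Finset.range R, (2 : ℝ) ^ (N i * binH (y i / N i)) := by
        push_cast
        exact Finset.prod_le_prod (fun i _ => by positivity)
          fun i hi => choose_le_two_rpow (hy i hi)
    _ = 2 ^ ∑ i ∈ Finset.range R, (N i : ℝ) * binH (y i / N i) :=
        (Real.rpow_sum_of_pos two_pos _ _).symm
    _ ≤ 2 ^ (n * binH (s / n) + n * E) := Real.rpow_le_rpow_of_exponent_le one_le_two h2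
    _ = 2 ^ (n * binH (s / n)) * 2 ^ (n * E) := Real.rpow_add two_pos _ _
    _ ≤ (n + 1) * n.choose s * 2 ^ (n * E) := by gcongr
    _ = _ := by ring

theorem entropyGap_congr {ι : Type*} {G : Finset ι} {c α α' : ι → ℝ} (h : ∀ i ∈ G, α i = α' i) :
    entropyGap G c α = entropyGap G c α' := by
  unfold entropyGap
  congr 1
  · exact Finset.sum_congr rfl fun i hi => by rw [h i hi]
  · exact congrArg _ (Finset.sum_congr rfl fun i hi => by rw [h i hi])

section Layered

variable {n M a : ℕ} {μ : Fin n → ℝ} {lev : Fin n → ℕ} {E : ℝ}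

/-- A halving set meets a small residual class of atoms in all or nothing. -/
theorem filter_eq_empty_or_of_sum_eq_half (hlev : ∀ x, lev x < M + 2) (hμ₀ : ∀ x, 0 < μ x)
    (ha : 1 ≤ a) (hμ : ∀ x, lev x ≤ M → μ x = ((2 : ℝ) ^ (a + lev x))⁻¹)
    (hres : ∑ x with lev x = M + 1, μ x = ((2 : ℝ) ^ (a + M))⁻¹)
    {A : Finset (Fin n)} (hA : ∑ x ∈ A, μ x = 1 / 2) :
    A.filter (lev · = M + 1) = ∅ ∨ Aᶜ.filter (lev · = M + 1) = ∅ := by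
  have hempty : ∀ B : Finset (Fin n), ∑ x ∈ B, μ x = 0 → B = ∅ := fun B hB => by
    by_contra hne
    exact (Finset.sum_pos (fun x _ => hμ₀ x) (Finset.nonempty_iff_ne_empty.2 hne)).ne' hB
  have hsplit : ∑ x ∈ A.filter (lev · = M + 1), μ x + ∑ x ∈ Aᶜ.filter (lev · = M + 1), μ x
      = ((2 : ℝ) ^ (a + M))⁻¹ := by
    rw [← hres, Finset.sum_filter, Finset.sum_filter, Finset.sum_filter,
      Finset.sum_add_sum_compl]
  have hA' : ∑ x ∈ A.filter (lev · = M + 1), μ x + ∑ x ∈ A.filter (¬ lev · = M + 1), μ x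
      = 1 / 2 := by rw [Finset.sum_filter_add_sum_filter_not, hA]
  rw [sum_eq_sum_range_card_fiber_mul (R := M + 1) (A.filter (¬ lev · = M + 1))
    (w := fun i => ((2 : ℝ) ^ (a + i))⁻¹) (fun x hx => by
      have := (Finset.mem_filter.1 hx).2
      have := hlev x
      omega) (fun x hx => hμ x (by
      have := (Finset.mem_filter.1 hx).2
      have := hlev x
      omega))] at hA'
  set y : ℕ → ℕ := fun i => ((A.filter (¬ lev · = M + 1)).filter (lev · = i)).card
  obtain ⟨z, hz⟩ : ∃ z : ℤ, ∑ x ∈ A.filter (lev · = M + 1), μ x = z * ((2 : ℝ) ^ (a + M))⁻¹ := by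
    refine ⟨2 ^ (a - 1 + M) - ∑ i ∈ Finset.range (M + 1), y i * 2 ^ (M - i), ?_⟩
    rw [eq_sub_of_add_eq hA']
    push_cast
    rw [sub_mul, Finset.sum_mul]
    congr 1
    · obtain ⟨a, rfl⟩ := Nat.exists_eq_add_of_le' ha
      rw [Nat.add_sub_cancel, show a + 1 + M = a + M + 1 by ring, pow_succ]
      field_simp
    · refine Finset.sum_congr rfl fun i hi => ?_
      obtain ⟨j, rfl⟩ := Nat.exists_eq_add_of_le (Nat.lt_succ_iff.1 (Finset.mem_range.1 hi))
      rw [Nat.add_sub_cancel_left, ← add_assoc a i j, pow_add _ (a + i)]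
      field_simp
      rfl
  have h1 : 0 ≤ ∑ x ∈ A.filter (lev · = M + 1), μ x := Finset.sum_nonneg fun x _ => (hμ₀ x).le
  have h2 : 0 ≤ ∑ x ∈ Aᶜ.filter (lev · = M + 1), μ x := Finset.sum_nonneg fun x _ => (hμ₀ x).le
  have hpos : 0 < ((2 : ℝ) ^ (a + M))⁻¹ := by positivity
  have hz₀ : 0 ≤ z := by
    have : (0 : ℝ) ≤ z := nonneg_of_mul_nonneg_left (hz ▸ h1) hpos
    exact_mod_cast this
  have hz₁ : z ≤ 1 := by
    have : (z : ℝ) ≤ 1 := by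
      refine le_of_mul_le_mul_right ?_ hpos
      linarith
    exact_mod_cast this
  obtain rfl | rfl : z = 0 ∨ z = 1 := by omega
  · exact Or.inl (hempty _ (by simpa using hz))
  · refine Or.inr (hempty _ ?_)
    push_cast at hz
    linarith

theorem splRatio_le_of_layered (hn : 0 < n) (hlev : ∀ x, lev x < M + 2) (hμ₀ : ∀ x, 0 < μ x)
    (hμ₁ : ∑ x, μ x = 1) (ha : 1 ≤ a)
    (hμ : ∀ x, lev x ≤ M → μ x = ((2 : ℝ) ^ (a + lev x))⁻¹)
    (hres : ∑ x with lev x = M + 1, μ x = ((2 : ℝ) ^ (a + M))⁻¹) {N : ℕ → ℕ}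
    (hN : ∀ i ≤ M, (Finset.univ.filter (lev · = i)).card = N i)
    (hE : ∀ α : ℕ → ℝ, (∀ i, α i ∈ Set.Icc (0 : ℝ) 1) →
      ∑ i ∈ Finset.range (M + 1), α i * ((N i : ℝ) / n) / 2 ^ i = 2 ^ (a - 1) / n →
      entropyGap (Finset.range (M + 1)) (fun i => (N i : ℝ) / n) α ≤ E)
    {s : ℕ} (hs : s ≤ n) : splRatio n μ s ≤ (n + 1) ^ (M + 3) * 2 ^ (n * E) := by
  have hn' : (0 : ℝ) < n := by exact_mod_cast hn
  have hNsum : ∑ i ∈ Finset.range (M + 1), N i ≤ n := by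
    have h1 := card_eq_sum_range_card_fiber hlev Finset.univ
    rw [Finset.card_univ, Fintype.card_fin, Finset.sum_range_succ,
      Finset.sum_congr rfl fun i hi => hN i (Nat.lt_succ_iff.1 (Finset.mem_range.1 hi))] at h1
    exact (Nat.le_add_right _ _).trans_eq h1.symm
  have key₀ : ∀ A : Finset (Fin n), A.filter (lev · = M + 1) = ∅ → ∑ x ∈ A, μ x = 1 / 2 →
      ((∏ i ∈ Finset.range (M + 1), (N i).choose (A.filter (lev · = i)).card : ℕ) : ℝ)
        ≤ (n + 1) * 2 ^ (n * E) * n.choose A.card := by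
    intro A hA hA₁
    have hlt : ∀ x ∈ A, lev x < M + 1 := fun x hx => by
      have h1 : x ∉ A.filter (lev · = M + 1) := by simp [hA]
      have h2 := hlev x
      have h3 : lev x ≠ M + 1 := fun h => h1 (Finset.mem_filter.2 ⟨hx, h⟩)
      omega
    have hcard : A.card = ∑ i ∈ Finset.range (M + 1), (A.filter (lev · = i)).card :=
      Finset.card_eq_sum_card_fiberwise fun x hx => by simpa using hlt x hx
    have hy : ∀ i ∈ Finset.range (M + 1), (A.filter (lev · = i)).card ≤ N i := fun i hi => by
      rw [← hN i (Nat.lt_succ_iff.1 (Finset.mem_range.1 hi))]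
      exact Finset.card_le_card (Finset.filter_subset_filter _ (Finset.subset_univ _))
    rw [hcard]
    refine prod_choose_le_two_rpow_mul_choose hn hy hNsum ?_
    set y : ℕ → ℕ := fun i => (A.filter (lev · = i)).card with hy_def
    have hα : ∀ i ∈ Finset.range (M + 1), (y i : ℝ) / N i ∈ Set.Icc (0 : ℝ) 1 := fun i hi =>
      ⟨by positivity, div_le_one_of_le₀ (by exact_mod_cast hy i hi) (by positivity)⟩
    have := hE (fun i => if i < M + 1 then (y i : ℝ) / N i else 0) (fun i => by
      split_ifs with h
      · exact hα i (Finset.mem_range.2 h)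
      · simp) (by
      rw [sum_eq_sum_range_card_fiber_mul (R := M + 1) A (w := fun i => ((2 : ℝ) ^ (a + i))⁻¹)
        hlt fun x hx => hμ x (Nat.lt_succ_iff.1 (hlt x hx))] at hA₁
      have e : (2 : ℝ) ^ (a - 1) / n = 2 ^ a / n * (1 / 2) := by
        obtain ⟨a, rfl⟩ := Nat.exists_eq_add_of_le' ha
        rw [Nat.add_sub_cancel, pow_succ]
        field_simp
      rw [e, ← hA₁, Finset.mul_sum]
      refine Finset.sum_congr rfl fun i hi => ?_
      rw [if_pos (Finset.mem_range.1 hi)]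
      rcases Nat.eq_zero_or_pos (N i) with h0 | h0
      · have h2 : y i = 0 := Nat.le_zero.1 ((hy i hi).trans_eq h0)
        simp only [hy_def] at h2
        simp [h0, h2]
      · have : (0 : ℝ) < N i := by exact_mod_cast h0
        rw [pow_add]
        field_simp
        rfl)
    rwa [entropyGap_congr fun i hi => if_pos (Finset.mem_range.1 hi)] at this
  have key : ∀ A : Finset (Fin n), ∑ x ∈ A, μ x = 1 / 2 →
      ((∏ i ∈ Finset.range (M + 2), (Finset.univ.filter (lev · = i)).card.choose
        (A.filter (lev · = i)).card : ℕ) : ℝ) ≤ (n + 1) * 2 ^ (n * E) * n.choose A.card := by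
    intro A hA
    have hcompl : ∀ i, (A.filter (lev · = i)).card + (Aᶜ.filter (lev · = i)).card
        = (Finset.univ.filter (lev · = i)).card := fun i => by
      rw [Finset.card_filter, Finset.card_filter, Finset.card_filter, Finset.sum_add_sum_compl]
    rw [Finset.prod_range_succ]
    rcases filter_eq_empty_or_of_sum_eq_half hlev hμ₀ ha hμ hres hA with h | h
    · rw [h, Finset.card_empty, Nat.choose_zero_right, mul_one,
        Finset.prod_congr rfl fun i hi => by
          rw [hN i (Nat.lt_succ_iff.1 (Finset.mem_range.1 hi))]]
      exact key₀ A h hA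
    · have h1 := hcompl (M + 1)
      rw [h, Finset.card_empty, add_zero] at h1
      have hAc : ∑ x ∈ Aᶜ, μ x = 1 / 2 := by
        have := Finset.sum_add_sum_compl A μ
        linarith
      have h2 := key₀ Aᶜ h hAc
      have h3 : (Aᶜ).card = n - A.card := by rw [Finset.card_compl, Fintype.card_fin]
      rw [h3, Nat.choose_symm (by simpa using A.card_le_univ)] at h2
      rw [h1, Nat.choose_self, mul_one]
      convert h2 using 3 with i hi
      rw [← hN i (Nat.lt_succ_iff.1 (Finset.mem_range.1 hi)), ← hcompl i]
      exact Nat.choose_symm_add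
  have hset : {A : Finset (Fin n) | A.card = s ∧ ∑ x ∈ A, μ x = 1 / 2}
      = ((Finset.univ.filter fun A : Finset (Fin n) => A.card = s ∧ ∑ x ∈ A, μ x = 1 / 2 :
        Finset (Finset (Fin n))) : Set (Finset (Fin n))) := by
    ext A
    simp
  have hchoose : (0 : ℝ) < n.choose s := by exact_mod_cast Nat.choose_pos hs
  unfold splRatio
  rw [hset, Set.ncard_coe_finset, div_le_iff₀ hchoose]
  refine (card_le_of_forall_prod_choose_le hlev _ (by positivity)
    (B := (n + 1) * 2 ^ (n * E) * n.choose s) fun A hA => ?_).trans (le_of_eq ?_)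
  · obtain ⟨h1, h2⟩ := (Finset.mem_filter.1 hA).2
    rw [← h1]
    exact key A h2
  · rw [Fintype.card_fin]
    ring

end Layered

theorem sum_range_inv_two_pow_min (m : ℕ) :
    ∑ j ∈ Finset.range (m + 1), ((2 : ℝ) ^ min (j + 1) m)⁻¹ = 1 := by
  rw [Finset.sum_range_succ, min_eq_right (Nat.le_succ m)]
  have : ∀ j ∈ Finset.range m, ((2 : ℝ) ^ min (j + 1) m)⁻¹ = ((2 : ℝ) ^ (j + 1))⁻¹ :=
    fun j hj => by rw [min_eq_left (Finset.mem_range.1 hj)]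
  rw [Finset.sum_congr rfl this]
  induction m with
  | zero => simp
  | succ m ih =>
    rw [Finset.sum_range_succ]
    have ih := ih fun j hj => by rw [min_eq_left (Finset.mem_range.1 hj)]
    have : ((2 : ℝ) ^ m)⁻¹ = ((2 : ℝ) ^ (m + 1))⁻¹ + ((2 : ℝ) ^ (m + 1))⁻¹ := by
      rw [pow_succ]
      field_simp
      norm_num
    linarith

/-- A dyadic distribution with prescribed level sizes, completed by a geometric chain of atoms. -/
theorem exists_layered_dist {n M a D : ℕ} {N : ℕ → ℕ} (ha : 1 ≤ a)
    (hcard : ∑ i ∈ Finset.range (M + 1), N i + (D + 1) = n)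
    (hmass : ∑ i ∈ Finset.range (M + 1), N i * 2 ^ (M - i) + 1 = 2 ^ (a + M)) :
    ∃ (μ : Fin n → ℝ) (lev : Fin n → ℕ), IsDyadicDist n μ ∧ (∀ x, 0 < μ x) ∧
      (∀ x, lev x < M + 2) ∧ (∀ x, lev x ≤ M → μ x = ((2 : ℝ) ^ (a + lev x))⁻¹) ∧
      (∀ x, lev x = M + 1 → μ x ≤ ((2 : ℝ) ^ (a + M))⁻¹) ∧
      ∑ x with lev x = M + 1, μ x = ((2 : ℝ) ^ (a + M))⁻¹ ∧
      (∀ i ≤ M, (Finset.univ.filter (lev · = i)).card = N i) ∧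
      (Finset.univ.filter (lev · = M + 1)).card = D + 1 := by
  let N' : Fin (M + 2) → ℕ := fun i => if (i : ℕ) ≤ M then N i else D + 1
  have hN' : ∑ i, N' i = n := by
    rw [Fin.sum_univ_castSucc, ← hcard, Finset.sum_range]
    congr 1
    · refine Finset.sum_congr rfl fun i _ => ?_
      have : (i : ℕ) ≤ M := by omega
      simp [N', this]
    · simp [N']
  let e : Fin n ≃ Σ i, Fin (N' i) := (Fintype.equivFinOfCardEq (by simp [hN'])).symm
  let ex : (Σ i, Fin (N' i)) → ℕ := fun p =>
    if (p.1 : ℕ) ≤ M then a + p.1 else a + M + min ((p.2 : ℕ) + 1) D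
  let μ : Fin n → ℝ := fun x => ((2 : ℝ) ^ ex (e x))⁻¹
  let lev : Fin n → ℕ := fun x => (e x).1
  have hlev : ∀ x, lev x < M + 2 := fun x => (e x).1.2
  have hlow : ∀ x, lev x ≤ M → μ x = ((2 : ℝ) ^ (a + lev x))⁻¹ := fun x hx => by
    simp only [μ, ex, lev] at hx ⊢
    rw [if_pos hx]
  have hfib : ∀ (i : Fin (M + 2)) (g : (Σ i, Fin (N' i)) → ℝ),
      ∑ x with lev x = i, g (e x) = ∑ j : Fin (N' i), g ⟨i, j⟩ := by
    intro i g
    rw [Finset.sum_filter, e.sum_comp (fun p => if (p.1 : ℕ) = i then g p else 0),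
      Fintype.sum_sigma, Finset.sum_eq_single i]
    · simp
    · intro b _ hb
      have : (b : ℕ) ≠ i := fun h => hb (Fin.ext h)
      simp [this]
    · simp
  have hcardfib : ∀ i : Fin (M + 2), (Finset.univ.filter (lev · = i)).card = N' i := by
    intro i
    have := hfib i fun _ => 1
    simp only [Finset.sum_const, nsmul_eq_mul, mul_one, Finset.card_univ, Fintype.card_fin] at this
    exact_mod_cast this
  have hcardlow : ∀ i ≤ M, (Finset.univ.filter (lev · = i)).card = N i := fun i hi => by
    have := hcardfib ⟨i, by omega⟩
    simpa [N', hi] using this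
  have hres : ∑ x with lev x = M + 1, μ x = ((2 : ℝ) ^ (a + M))⁻¹ := by
    have h1 := hfib (Fin.last (M + 1)) fun p => ((2 : ℝ) ^ ex p)⁻¹
    have h2 : N' (Fin.last (M + 1)) = D + 1 := by simp [N']
    rw [Fin.val_last] at h1
    rw [h1]
    have h3 : ∀ j : Fin (N' (Fin.last (M + 1))), ((2 : ℝ) ^ ex ⟨Fin.last (M + 1), j⟩)⁻¹
        = ((2 : ℝ) ^ (a + M))⁻¹ * ((2 : ℝ) ^ min ((j : ℕ) + 1) D)⁻¹ := fun j => by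
      simp only [ex, Fin.val_last, if_neg (Nat.not_succ_le_self M)]
      rw [pow_add _ (a + M), mul_inv]
    simp_rw [h3]
    rw [← Finset.mul_sum, ← Finset.sum_range (fun j => ((2 : ℝ) ^ min (j + 1) D)⁻¹), h2,
      sum_range_inv_two_pow_min, mul_one]
  refine ⟨μ, lev, ⟨fun x => by positivity, ?_, fun x => Or.inr ⟨ex (e x), ?_, rfl⟩⟩,
    fun x => by positivity, hlev, hlow, fun x hx => ?_, hres, hcardlow, ?_⟩
  · have h1 : ∑ x, μ x = ∑ x with lev x = M + 1, μ x + ∑ x with ¬ lev x = M + 1, μ x :=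
      (Finset.sum_filter_add_sum_filter_not _ _ _).symm
    have hlt : ∀ x ∈ Finset.univ.filter (¬ lev · = M + 1), lev x < M + 1 := fun x hx => by
      have := (Finset.mem_filter.1 hx).2
      have := hlev x
      omega
    rw [h1, hres, sum_eq_sum_range_card_fiber_mul (R := M + 1) (w := fun i => ((2 : ℝ) ^ (a + i))⁻¹)
      _ hlt fun x hx => hlow x (Nat.lt_succ_iff.1 (hlt x hx))]
    have h2 : ∀ i ∈ Finset.range (M + 1),
        ((((Finset.univ.filter (¬ lev · = M + 1)).filter (lev · = i)).card : ℕ) : ℝ)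
          * ((2 : ℝ) ^ (a + i))⁻¹ = (N i * 2 ^ (M - i)) * ((2 : ℝ) ^ (a + M))⁻¹ := by
      intro i hi
      have hi' := Nat.lt_succ_iff.1 (Finset.mem_range.1 hi)
      rw [Finset.filter_filter, ← hcardlow i hi']
      have : (Finset.univ.filter fun x => ¬ lev x = M + 1 ∧ lev x = i)
          = Finset.univ.filter (lev · = i) := by
        ext x
        simp only [Finset.mem_filter, Finset.mem_univ, true_and]
        omega
      rw [this]
      obtain ⟨j, rfl⟩ := Nat.exists_eq_add_of_le hi'
      rw [Nat.add_sub_cancel_left, ← add_assoc a i j, pow_add _ (a + i)]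
      field_simp
    rw [Finset.sum_congr rfl h2, ← Finset.sum_mul]
    have h3 : ∑ i ∈ Finset.range (M + 1), (N i : ℝ) * 2 ^ (M - i) + 1 = 2 ^ (a + M) := by
      exact_mod_cast hmass
    rw [eq_sub_of_add_eq h3]
    field_simp
    ring
  · simp only [ex]
    split_ifs <;> omega
  · simp only [lev] at hx
    have : ¬ ((e x).1 : ℕ) ≤ M := by omega
    simp only [μ, ex, if_neg this]
    exact inv_anti₀ (by positivity) (pow_le_pow_right₀ one_le_two (by omega))
  · have := hcardfib (Fin.last (M + 1))
    simpa [N'] using this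

theorem splRatio_nonneg (n : ℕ) (μ : Fin n → ℝ) (i : ℕ) : 0 ≤ splRatio n μ i := by
  unfold splRatio
  positivity

theorem rhoSpl_nonneg (n : ℕ) (μ : Fin n → ℝ) : 0 ≤ rhoSpl n μ := by
  refine Real.sSup_nonneg ?_
  rintro _ ⟨i, _, _, rfl⟩
  exact splRatio_nonneg n μ i

theorem splRatio_le_rhoSpl {n i : ℕ} (μ : Fin n → ℝ) (h₁ : 1 ≤ i) (h₂ : i ≤ n - 1) :
    splRatio n μ i ≤ rhoSpl n μ := by
  refine le_csSup (((Set.finite_Icc 1 (n - 1)).image (splRatio n μ)).bddAbove.mono ?_)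
    ⟨i, h₁, h₂, rfl⟩
  rintro _ ⟨j, hj₁, hj₂, rfl⟩
  exact ⟨j, ⟨hj₁, hj₂⟩, rfl⟩

theorem exists_pow_le_two_rpow (m : ℕ) {ε : ℝ} (hε : 0 < ε) :
    ∃ K : ℕ, ∀ n : ℕ, K ≤ n → ((n : ℝ) + 1) ^ m ≤ 2 ^ (ε * n) := by
  have hr : 1 < (2 : ℝ) ^ ε := Real.one_lt_rpow one_lt_two hε
  have hr₀ : 0 < (2 : ℝ) ^ ε := by positivity
  have h1 := (tendsto_pow_const_div_const_pow_of_one_lt m hr).eventually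
    (gt_mem_nhds (inv_pos.2 hr₀))
  obtain ⟨K, hK⟩ := Filter.eventually_atTop.1 h1
  refine ⟨K, fun n hn => ?_⟩
  have h2 := hK (n + 1) (by omega)
  rw [div_lt_iff₀ (by positivity), pow_succ] at h2
  rw [Real.rpow_mul zero_le_two, Real.rpow_natCast]
  push_cast at h2
  refine h2.le.trans_eq ?_
  field_simp

section Rounding

variable {β : ℝ} {b : ℕ} {c : ℕ → ℝ}

/-- Feasible weights can be perturbed so as to leave some slack in their total. -/
theorem memC.exists_slack (h : memC β c b) (hβ : 1 ≤ β) (hb : 1 ≤ b) {σ : ℝ} (hσ₀ : 0 < σ)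
    (hσ₁ : σ ≤ 1) :
    ∃ c', memC β c' b ∧ 0 < c' 0 ∧ (∀ n, ∑ i ∈ Finset.range n, c' i ≤ 1 - σ / 2) ∧
      ∀ n, ∑ i ∈ Finset.range n, |c' i - c i| ≤ 2 * σ := by
  set u := 1 / (β * 2 ^ b) with hu
  have hβ₀ : 0 < β := by linarith
  have hu₀ : 0 < u := by positivity
  have hu₁ : u ≤ 1 / 2 := by
    refine one_div_le_one_div_of_le two_pos ?_
    have : (2 : ℝ) ^ 1 ≤ 2 ^ b := pow_le_pow_right₀ one_le_two hb
    nlinarith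
  set d : ℕ → ℝ := fun i => if i = 0 then u else 0 with hd
  have hd₀ : ∀ i, 0 ≤ d i := fun i => by
    simp only [hd]
    split_ifs <;> positivity
  have hd_sum : ∀ n, ∑ i ∈ Finset.range n, d i ≤ u := fun n => by
    simp only [hd, Finset.sum_ite_eq']
    split_ifs <;> linarith
  have hsum : ∀ n, ∑ i ∈ Finset.range n, ((1 - σ) * c i + σ * d i) ≤ 1 - σ / 2 := fun n => by
    rw [Finset.sum_add_distrib, ← Finset.mul_sum, ← Finset.mul_sum]
    nlinarith [h.2.2 n, hd_sum n]
  have hnn : ∀ i, 0 ≤ (1 - σ) * c i + σ * d i := fun i =>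
    add_nonneg (mul_nonneg (by linarith) (h.1 i).1) (mul_nonneg hσ₀.le (hd₀ i))
  refine ⟨fun i => (1 - σ) * c i + σ * d i, ⟨fun i => ⟨hnn i, ?_⟩, ?_, fun n => ?_⟩, ?_, hsum,
    fun n => ?_⟩
  · have := Finset.single_le_sum (fun j _ => hnn j) (Finset.self_mem_range_succ i)
    linarith [hsum (i + 1)]
  · have hs : HasSum (fun i => d i / 2 ^ i) u := by
      have := hasSum_single (f := fun i => d i / 2 ^ i) 0 fun i hi => by simp [hd, hi]
      simpa [hd] using this
    have : ∀ i, ((1 - σ) * c i + σ * d i) / 2 ^ i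
        = (1 - σ) * (c i / 2 ^ i) + σ * (d i / 2 ^ i) := fun i => by ring
    simp_rw [this]
    rw [(h.summable_div.mul_left _).tsum_add (hs.summable.mul_left _), tsum_mul_left,
      tsum_mul_left, h.2.1, hs.tsum_eq]
    ring
  · linarith [hsum n]
  · have := (h.1 0).1
    simp only [hd, if_true]
    have : 0 ≤ (1 - σ) * c 0 := mul_nonneg (by linarith) this
    positivity
  · calc ∑ i ∈ Finset.range n, |(1 - σ) * c i + σ * d i - c i|
        ≤ ∑ i ∈ Finset.range n, σ * (c i + d i) := by
          refine Finset.sum_le_sum fun i _ => ?_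
          rw [show (1 - σ) * c i + σ * d i - c i = σ * (d i - c i) by ring, abs_mul,
            abs_of_pos hσ₀]
          refine mul_le_mul_of_nonneg_left ?_ hσ₀.le
          rw [abs_le]
          constructor <;> linarith [hd₀ i, (h.1 i).1]
      _ = σ * (∑ i ∈ Finset.range n, c i + ∑ i ∈ Finset.range n, d i) := by
          rw [← Finset.mul_sum, Finset.sum_add_distrib]
      _ ≤ 2 * σ := by nlinarith [h.2.2 n, hd_sum n]

theorem natCast_ceil_sub_one_mem_Icc {x : ℝ} (hx : 0 ≤ x) :
    ((⌈x⌉₊ - 1 : ℕ) : ℝ) ∈ Set.Icc (x - 1) x := by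
  rcases hx.eq_or_lt with rfl | hx
  · simp
  · have h1 := Nat.ceil_lt_add_one hx.le
    have h2 := Nat.le_ceil x
    rw [Nat.cast_sub (Nat.ceil_pos.2 hx), Nat.cast_one]
    constructor <;> linarith

/-- Feasible weights with slack are approximated by level sizes of total weight just below a
power of two. -/
theorem memC.exists_rounding (h : memC β c b) (hβ : 1 ≤ β) (h0 : 0 < c 0) {σ ν : ℝ} (hσ : 0 < σ)
    (hν : 0 < ν) (hslack : ∀ n, ∑ i ∈ Finset.range n, c i ≤ 1 - σ) :
    ∃ M K : ℕ, 0 < M ∧ ∀ k, K ≤ k → ∀ n : ℕ, (n : ℝ) = β * 2 ^ k → ∃ N : ℕ → ℕ,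
      0 < N 0 ∧ ∑ i ∈ Finset.range (M + 1), N i < n ∧
      ∑ i ∈ Finset.range (M + 1), N i * 2 ^ (M - i) + 1 = 2 ^ (k - b + M) ∧
      ∑ i ∈ Finset.range (M + 1), |(N i : ℝ) / n - c i| ≤ ν := by
  obtain ⟨M, hM, hM₀⟩ := (((tendsto_sum_nat_add c).eventually
    (gt_mem_nhds (show (0 : ℝ) < ν / 4 by positivity))).and
      (Filter.eventually_gt_atTop 0)).exists
  set t := ∑' i, c (i + M) with ht
  have hcM : c M ≤ t := by
    have := ((summable_nat_add_iff M).2 h.summable).le_tsum 0 fun i _ => (h.1 _).1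
    simpa using this
  have hsum : ∑ i ∈ Finset.range M, c i + t ≤ 1 - σ := by
    rw [h.summable.sum_add_tsum_nat_add]
    exact h.summable.tsum_le_of_sum_range_le hslack
  set W := ∑ i ∈ Finset.range M, c i / 2 ^ i with hW
  set t' := ∑' i, c (i + M) / 2 ^ (i + M) with ht'
  have hmass : W + t' = 1 / (β * 2 ^ b) := by
    rw [← h.2.1]
    exact h.summable_div.sum_add_tsum_nat_add M
  have ht'₀ : 0 ≤ t' := tsum_nonneg fun i => div_nonneg (h.1 _).1 (by positivity)
  have ht't : 2 ^ M * t' ≤ t := by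
    rw [ht', ← tsum_mul_left]
    refine (((summable_nat_add_iff M).2 h.summable_div).mul_left _).tsum_le_tsum (fun i => ?_)
      ((summable_nat_add_iff M).2 h.summable)
    rw [pow_add, mul_div_assoc', mul_comm, mul_div_mul_right _ _ (by positivity)]
    exact div_le_self (h.1 _).1 (one_le_pow₀ one_le_two)
  set Q : ℝ := M * 2 ^ M with hQ
  have hQ₀ : 0 ≤ Q := by positivity
  refine ⟨M, ⌈Q / σ⌉₊ + ⌈(M + Q) / (ν / 2)⌉₊ + ⌈2 / c 0⌉₊ + b, hM₀, fun k hk n hn => ?_⟩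
  have hkn : (k : ℝ) ≤ n := by
    have h1 : (k : ℝ) ≤ 2 ^ k := by exact_mod_cast Nat.lt_two_pow_self.le
    have h2 : (0 : ℝ) < 2 ^ k := by positivity
    rw [hn]
    nlinarith
  have hbig : ∀ x : ℝ, ⌈x⌉₊ ≤ k → x ≤ n := fun x hx =>
    (Nat.le_ceil x).trans ((Nat.cast_le.2 hx).trans hkn)
  have hn₁ := hbig (Q / σ) (by omega)
  have hn₂ := hbig ((M + Q) / (ν / 2)) (by omega)
  have hn₃ := hbig (2 / c 0) (by omega)
  have hn₀ : (0 : ℝ) < n := lt_of_lt_of_le (by positivity) hn₃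
  rw [div_le_iff₀ hσ] at hn₁
  rw [div_le_iff₀ (by positivity)] at hn₂
  rw [div_le_iff₀ h0] at hn₃
  have htot : n * 2 ^ M * (W + t') = 2 ^ (k - b + M) := by
    obtain ⟨a, rfl⟩ := Nat.exists_eq_add_of_le' (show b ≤ k by omega)
    have : β ≠ 0 := by linarith
    rw [hmass, hn, Nat.add_sub_cancel, pow_add, pow_add]
    field_simp
  set N₀ : ℕ → ℕ := fun i => ⌈n * c i⌉₊ - 1 with hN₀
  have hN₀' : ∀ i, (N₀ i : ℝ) ∈ Set.Icc (n * c i - 1) (n * c i) := fun i =>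
    natCast_ceil_sub_one_mem_Icc (mul_nonneg hn₀.le (h.1 i).1)
  set T := ∑ i ∈ Finset.range M, N₀ i * 2 ^ (M - i) with hT
  have hWi : ∀ i ∈ Finset.range M, (n : ℝ) * 2 ^ M * (c i / 2 ^ i) = n * c i * 2 ^ (M - i) := by
    intro i hi
    rw [pow_sub₀ _ two_ne_zero (Finset.mem_range.1 hi).le]
    field_simp
  have hT_lt : (T : ℝ) < n * 2 ^ M * W := by
    rw [hT, hW, Finset.mul_sum, Finset.sum_congr rfl hWi]
    push_cast
    refine Finset.sum_lt_sum (fun i _ => ?_) ⟨0, Finset.mem_range.2 hM₀, ?_⟩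
    · exact mul_le_mul_of_nonneg_right (hN₀' i).2 (by positivity)
    · refine mul_lt_mul_of_pos_right ?_ (by positivity)
      have h1 := Nat.ceil_lt_add_one (show 0 ≤ n * c 0 by positivity)
      have h2 : 0 < ⌈n * c 0⌉₊ := Nat.ceil_pos.2 (by positivity)
      simp only [hN₀]
      rw [Nat.cast_sub h2]
      push_cast
      linarith
  have hT_ge : n * 2 ^ M * W - Q ≤ T := by
    have : n * 2 ^ M * W - T ≤ ∑ i ∈ Finset.range M, (2 : ℝ) ^ M := by
      rw [hT, hW, Finset.mul_sum, Finset.sum_congr rfl hWi]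
      push_cast
      rw [← Finset.sum_sub_distrib]
      refine Finset.sum_le_sum fun i _ => ?_
      have h1 : (2 : ℝ) ^ (M - i) ≤ 2 ^ M := pow_le_pow_right₀ one_le_two (Nat.sub_le _ _)
      have h2 : (0 : ℝ) < 2 ^ (M - i) := by positivity
      nlinarith [(hN₀' i).1]
    rw [Finset.sum_const, Finset.card_range, nsmul_eq_mul] at this
    linarith
  have hT_lt' : T < 2 ^ (k - b + M) := by
    have : (T : ℝ) < 2 ^ (k - b + M) := by
      rw [← htot]
      nlinarith [mul_nonneg (show (0 : ℝ) ≤ n * 2 ^ M by positivity) ht'₀]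
    exact_mod_cast this
  have hlast : ((2 ^ (k - b + M) - 1 - T : ℕ) : ℝ) ≤ n * t + Q - 1 := by
    rw [Nat.sub_sub, Nat.cast_sub (by omega)]
    push_cast
    rw [← htot]
    nlinarith [mul_le_mul_of_nonneg_left ht't hn₀.le]
  have hsumN : ∑ i ∈ Finset.range M, (N₀ i : ℝ) ≤ n * ∑ i ∈ Finset.range M, c i := by
    rw [Finset.mul_sum]
    exact Finset.sum_le_sum fun i _ => (hN₀' i).2
  refine ⟨fun i => if i < M then N₀ i else 2 ^ (k - b + M) - 1 - T, ?_, ?_, ?_, ?_⟩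
  · dsimp only
    rw [if_pos hM₀]
    have : 1 < ⌈n * c 0⌉₊ := Nat.lt_ceil.2 (by push_cast; linarith)
    simp only [hN₀]
    omega
  · dsimp only
    rw [Finset.sum_range_succ, if_neg (lt_irrefl M),
      Finset.sum_congr rfl fun i hi => if_pos (Finset.mem_range.1 hi)]
    have : ((∑ i ∈ Finset.range M, N₀ i + (2 ^ (k - b + M) - 1 - T) : ℕ) : ℝ) < n := by
      rw [Nat.cast_add, Nat.cast_sum]
      nlinarith
    exact_mod_cast this
  · dsimp only
    rw [Finset.sum_range_succ, if_neg (lt_irrefl M),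
      Finset.sum_congr rfl fun i hi => by rw [if_pos (Finset.mem_range.1 hi)], Nat.sub_self,
      pow_zero, mul_one]
    omega
  · dsimp only
    rw [Finset.sum_range_succ, if_neg (lt_irrefl M),
      Finset.sum_congr rfl fun i hi => by rw [if_pos (Finset.mem_range.1 hi)]]
    have h1 : ∑ i ∈ Finset.range M, |(N₀ i : ℝ) / n - c i| ≤ M / n := by
      calc ∑ i ∈ Finset.range M, |(N₀ i : ℝ) / n - c i| ≤ ∑ i ∈ Finset.range M, 1 / (n : ℝ) := by
            refine Finset.sum_le_sum fun i _ => ?_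
            rw [show (N₀ i : ℝ) / n - c i = (N₀ i - n * c i) / n by field_simp, abs_div,
              abs_of_pos hn₀]
            refine div_le_div_of_nonneg_right ?_ hn₀.le
            rw [abs_le]
            constructor <;> linarith [(hN₀' i).1, (hN₀' i).2]
        _ = M / n := by
            rw [Finset.sum_const, Finset.card_range, nsmul_eq_mul]
            ring
    have h2 : |((2 ^ (k - b + M) - 1 - T : ℕ) : ℝ) / n - c M| ≤ t + Q / n + t := by
      have h3 : ((2 ^ (k - b + M) - 1 - T : ℕ) : ℝ) / n ≤ t + Q / n := by
        rw [div_le_iff₀ hn₀, add_mul, div_mul_cancel₀ _ hn₀.ne']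
        linarith
      have h4 : 0 ≤ ((2 ^ (k - b + M) - 1 - T : ℕ) : ℝ) / n := by positivity
      have h5 : 0 ≤ Q / n := by positivity
      rw [abs_le]
      constructor <;> linarith [(h.1 M).1]
    have h3 : (M : ℝ) / n + Q / n ≤ ν / 2 := by
      rw [← add_div, div_le_iff₀ hn₀]
      linarith
    linarith

end Rounding

/-- For large `n` some distribution comes close to the bound given by `Gfun`. -/
theorem exists_dist_rhoSpl_le {β : ℝ} (hβ : 1 ≤ β) {ε : ℝ} (hε : 0 < ε) :
    ∃ K : ℕ, ∀ k, K ≤ k → ∀ n : ℕ, (n : ℝ) = β * 2 ^ k → ∃ μ : Fin n → ℝ,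
      IsDyadicDist n μ ∧ (∀ i, 0 < μ i) ∧ (∃ i j, μ i ≠ μ j) ∧
      rhoSpl n μ ≤ 2 ^ ((Gfun β + ε) * n) := by
  have hβ₀ : 0 < β := by linarith
  obtain ⟨c, b, hc, hG⟩ := exists_supP_lt_Gfun_add hβ (ε := ε / 4) (by positivity)
  obtain ⟨ν, hν, hgap⟩ := hc.shiftSeq.exists_entropyGap_le_supP_add hβ₀ (ε := ε / 4)
    (by positivity)
  obtain ⟨c', hc', hc'₀, hslack, hcc'⟩ := hc.shiftSeq.exists_slack hβ (by omega)
    (σ := min (ν / 4) 1) (by positivity) (min_le_right _ _)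
  obtain ⟨M, K₁, hM, hround⟩ := hc'.exists_rounding hβ hc'₀ (σ := min (ν / 4) 1 / 2) (ν := ν / 2)
    (by positivity) (by positivity) hslack
  obtain ⟨K₂, hpoly⟩ := exists_pow_le_two_rpow (M + 3) (ε := ε / 2) (by positivity)
  refine ⟨K₁ + K₂ + b + 2, fun k hk n hn => ?_⟩
  have hkn : k ≤ n := by
    have h1 : (k : ℝ) ≤ 2 ^ k := by exact_mod_cast Nat.lt_two_pow_self.le
    have h2 : (0 : ℝ) < 2 ^ k := by positivity
    have : (k : ℝ) ≤ n := by
      rw [hn]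
      nlinarith
    exact_mod_cast this
  have hn₀ : 0 < n := by omega
  have hn₀' : (0 : ℝ) < n := by exact_mod_cast hn₀
  obtain ⟨N, hN₀, hNn, hNmass, hNc⟩ := hround k (by omega) n hn
  obtain ⟨D, hD⟩ := Nat.exists_eq_add_of_lt hNn
  obtain ⟨μ, lev, hdy, hpos, hlev, hlow, hhigh, hres, hcard, hcardD⟩ :=
    exists_layered_dist (show 1 ≤ k - (b + 1) by omega) (hD.trans (add_assoc _ _ _)).symm hNmass
  have hNsum : ∑ i ∈ Finset.range (M + 1), (N i : ℝ) / n ≤ 1 := by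
    rw [← Finset.sum_div, div_le_one hn₀']
    exact_mod_cast hNn.le
  have hdist : ∑ i ∈ Finset.range (M + 1), |(N i : ℝ) / n - shiftSeq c i| ≤ ν := by
    have h1 := hcc' (M + 1)
    have h2 : ∑ i ∈ Finset.range (M + 1), |(N i : ℝ) / n - shiftSeq c i|
        ≤ ∑ i ∈ Finset.range (M + 1), (|(N i : ℝ) / n - c' i| + |c' i - shiftSeq c i|) :=
      Finset.sum_le_sum fun i _ => abs_sub_le _ _ _
    rw [Finset.sum_add_distrib] at h2
    linarith [min_le_left (ν / 4) 1]
  have hE : ∀ α : ℕ → ℝ, (∀ i, α i ∈ Set.Icc (0 : ℝ) 1) →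
      ∑ i ∈ Finset.range (M + 1), α i * ((N i : ℝ) / n) / 2 ^ i = 2 ^ (k - (b + 1) - 1) / n →
      entropyGap (Finset.range (M + 1)) (fun i => (N i : ℝ) / n) α ≤ Gfun β + ε / 2 := by
    intro α hα hα₁
    have := hgap (M + 1) (fun i => (N i : ℝ) / n) α (fun i => by positivity) hNsum hdist hα (by
      rw [hα₁, hn]
      obtain ⟨a, rfl⟩ := Nat.exists_eq_add_of_le' (show b + 1 + 1 ≤ k by omega)
      rw [show a + (b + 1 + 1) - (b + 1) - 1 = a by omega, pow_add _ a]
      field_simp)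
    linarith [hc.supP_shiftSeq_le]
  refine ⟨μ, hdy, hpos, ?_, ?_⟩
  · obtain ⟨x, hx⟩ : (Finset.univ.filter (lev · = 0)).Nonempty := by
      rw [← Finset.card_pos, hcard 0 (Nat.zero_le _)]
      exact hN₀
    obtain ⟨x', hx'⟩ : (Finset.univ.filter (lev · = M + 1)).Nonempty := by
      rw [← Finset.card_pos, hcardD]
      omega
    refine ⟨x, x', ne_of_gt ((hhigh x' (Finset.mem_filter.1 hx').2).trans_lt ?_)⟩
    have h0 := (Finset.mem_filter.1 hx).2
    rw [hlow x (by omega), h0]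
    exact inv_strictAnti₀ (by positivity) (pow_lt_pow_right₀ one_lt_two (by omega))
  · refine Real.sSup_le ?_ (by positivity)
    rintro _ ⟨s, _, hs, rfl⟩
    refine (splRatio_le_of_layered hn₀ hlev hpos hdy.2.1 (by omega) hlow hres hcard hE
      (by omega)).trans ?_
    calc ((n : ℝ) + 1) ^ (M + 3) * 2 ^ (n * (Gfun β + ε / 2))
        ≤ 2 ^ (ε / 2 * n) * 2 ^ (n * (Gfun β + ε / 2)) := by
          gcongr
          exact hpoly n (by omega)
      _ = 2 ^ ((Gfun β + ε) * n) := by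
          rw [← Real.rpow_add two_pos]
          congr 1
          ring

/-- Any family of halving sets of a fixed size bounds `rhoSpl` from below. -/
theorem card_div_choose_le_rhoSpl {n s : ℕ} {μ : Fin n → ℝ} (hμ₁ : ∑ x, μ x = 1)
    {S : Finset (Finset (Fin n))} (hS : S.Nonempty) (hs : ∀ A ∈ S, A.card = s)
    (hhalf : ∀ A ∈ S, ∑ x ∈ A, μ x = 1 / 2) : (S.card : ℝ) / n.choose s ≤ rhoSpl n μ := by
  obtain ⟨A, hA⟩ := hS
  have h1 : 1 ≤ s := by
    rw [← hs A hA, Nat.one_le_iff_ne_zero, Finset.card_ne_zero,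
      Finset.nonempty_iff_ne_empty]
    rintro rfl
    simpa using hhalf ∅ hA
  have h2 : s < n := by
    rw [← hs A hA]
    refine lt_of_le_of_ne (by simpa using A.card_le_univ) fun h => ?_
    have : A = Finset.univ := (Finset.card_eq_iff_eq_univ A).1 (by simpa using h)
    have h3 := hhalf A hA
    rw [this, hμ₁] at h3
    norm_num at h3
  refine le_trans ?_ (splRatio_le_rhoSpl μ h1 (by omega))
  unfold splRatio
  refine div_le_div_of_nonneg_right ?_ (by positivity)
  have hsub : (S : Set (Finset (Fin n))) ⊆ {A | A.card = s ∧ ∑ x ∈ A, μ x = 1 / 2} :=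
    fun A hA => ⟨hs A (Finset.mem_coe.1 hA), hhalf A (Finset.mem_coe.1 hA)⟩
  have hcard := Set.ncard_le_ncard hsub (Set.toFinite _)
  rw [Set.ncard_coe_finset] at hcard
  exact_mod_cast hcard

section Levels

variable {n : ℕ} {μ : Fin n → ℝ} {e : Fin n → ℕ}

/-- Dyadic atoms of total mass at least one half contain a subset of mass exactly one half. -/
theorem exists_subset_sum_eq_half (he : ∀ x, 1 ≤ e x) (hμ : ∀ x, μ x = ((2 : ℝ) ^ e x)⁻¹)
    (T : Finset (Fin n)) (hT : 1 / 2 ≤ ∑ x ∈ T, μ x) : ∃ A ⊆ T, ∑ x ∈ A, μ x = 1 / 2 := by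
  induction T using Finset.strongInduction with
  | H T ih =>
    rcases hT.eq_or_lt with hT | hT
    · exact ⟨T, subset_rfl, hT.symm⟩
    have hne : T.Nonempty := by
      by_contra h
      rw [Finset.not_nonempty_iff_eq_empty.1 h, Finset.sum_empty] at hT
      norm_num at hT
    obtain ⟨x, hx, hmax⟩ := T.exists_max_image e hne
    have h_int : (((∑ z ∈ T, 2 ^ (e x - e z) : ℕ) : ℕ) : ℝ) = 2 ^ e x * ∑ z ∈ T, μ z := by
      rw [Finset.mul_sum]
      push_cast
      refine Finset.sum_congr rfl fun z hz => ?_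
      rw [hμ, pow_sub₀ _ two_ne_zero (hmax z hz)]
    have hhalf : ((2 ^ (e x - 1) : ℕ) : ℝ) = 2 ^ e x * (1 / 2) := by
      push_cast
      rw [pow_sub₀ _ two_ne_zero (he x)]
      norm_num
    have hlt : 2 ^ (e x - 1) < ∑ z ∈ T, 2 ^ (e x - e z) := by
      have : ((2 ^ (e x - 1) : ℕ) : ℝ) < ((∑ z ∈ T, 2 ^ (e x - e z) : ℕ) : ℝ) := by
        rw [h_int, hhalf]
        exact mul_lt_mul_of_pos_left hT (by positivity)
      exact_mod_cast this
    have hle : ((2 ^ (e x - 1) : ℕ) : ℝ) + 1 ≤ ((∑ z ∈ T, 2 ^ (e x - e z) : ℕ) : ℝ) := by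
      exact_mod_cast hlt
    rw [h_int, hhalf, ← Finset.add_sum_erase T μ hx, mul_add, hμ x,
      mul_inv_cancel₀ (by positivity)] at hle
    obtain ⟨A, hA, hA₁⟩ := ih (T.erase x) (Finset.erase_ssubset hx)
      (le_of_mul_le_mul_left (by linarith) (show (0 : ℝ) < 2 ^ e x by positivity))
    exact ⟨A, hA.trans (Finset.erase_subset _ _), hA₁⟩

theorem sum_Ico_ite_two_pow_div_le (k K e : ℕ) :
    ∑ M ∈ Finset.Ico k (k + K), (if M ≤ e then (2 : ℝ) ^ M / 2 ^ e else 0) ≤ 2 := by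
  rw [← Finset.sum_filter]
  calc ∑ M ∈ (Finset.Ico k (k + K)).filter (· ≤ e), (2 : ℝ) ^ M / 2 ^ e
      ≤ ∑ M ∈ Finset.range (e + 1), (2 : ℝ) ^ M / 2 ^ e := by
        refine Finset.sum_le_sum_of_subset_of_nonneg (fun M hM => ?_) fun _ _ _ => by positivity
        simp only [Finset.mem_filter, Finset.mem_range] at hM ⊢
        omega
    _ ≤ 2 := by
        rw [← Finset.sum_div, div_le_iff₀ (by positivity)]
        have : ∑ M ∈ Finset.range (e + 1), 2 ^ M < 2 ^ (e + 1) := by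
          rw [Nat.geomSum_eq (le_refl 2), Nat.div_one]
          exact Nat.sub_lt (by positivity) one_pos
        rw [pow_succ, mul_comm] at this
        exact_mod_cast this.le

/-- Some truncation level in a window of length `K` loses at most a fraction `2 / K`. -/
theorem exists_truncation_level (e : Fin n → ℕ) (k : ℕ) {K : ℕ} (hK : 0 < K) :
    ∃ M, k ≤ M ∧ M < k + K ∧ ∑ x with M ≤ e x, (2 : ℝ) ^ M / 2 ^ e x ≤ 2 * n / K := by
  have h1 : ∑ M ∈ Finset.Ico k (k + K), ∑ x with M ≤ e x, (2 : ℝ) ^ M / 2 ^ e x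
      ≤ ∑ M ∈ Finset.Ico k (k + K), (2 * n / K : ℝ) := by
    simp_rw [Finset.sum_filter]
    rw [Finset.sum_comm, Finset.sum_const, Nat.card_Ico, Nat.add_sub_cancel_left, nsmul_eq_mul,
      mul_div_cancel₀ _ (by positivity)]
    calc _ ≤ ∑ x : Fin n, (2 : ℝ) :=
          Finset.sum_le_sum fun x _ => sum_Ico_ite_two_pow_div_le k K (e x)
      _ = 2 * n := by
          rw [Finset.sum_const, Finset.card_univ, Fintype.card_fin, nsmul_eq_mul, mul_comm]
  obtain ⟨M, hM, hle⟩ := Finset.exists_le_of_sum_le (by simpa using hK) h1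
  rw [Finset.mem_Ico] at hM
  exact ⟨M, hM.1, hM.2, hle⟩

/-- The normalized level sizes of a dyadic distribution, where all levels from `M` on are
collapsed into level `M` preserving their mass. -/
noncomputable def levelWeight (e : Fin n → ℕ) (M i : ℕ) : ℝ :=
  (∑ x with min (e x) M = i, (2 : ℝ) ^ i / 2 ^ e x) / n

theorem levelWeight_nonneg (e : Fin n → ℕ) (M i : ℕ) : 0 ≤ levelWeight e M i := by
  unfold levelWeight
  positivity

theorem levelWeight_of_lt {M i : ℕ} (hi : i < M) :
    levelWeight e M i = ((Finset.univ.filter (e · = i)).card : ℝ) / n := by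
  unfold levelWeight
  congr 1
  have : (Finset.univ.filter fun x => min (e x) M = i) = Finset.univ.filter (e · = i) := by
    ext x
    simp only [Finset.mem_filter, Finset.mem_univ, true_and]
    omega
  rw [this, Finset.sum_congr rfl fun x hx => by
    rw [(Finset.mem_filter.1 hx).2, div_self (by positivity)], Finset.sum_const, nsmul_eq_mul,
    mul_one]

theorem levelWeight_self (M : ℕ) :
    levelWeight e M M = (∑ x with M ≤ e x, (2 : ℝ) ^ M / 2 ^ e x) / n := by
  unfold levelWeight
  simp only [min_eq_right_iff]

theorem levelWeight_of_gt {M i : ℕ} (hi : M < i) : levelWeight e M i = 0 := by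
  unfold levelWeight
  rw [Finset.filter_false_of_mem fun x _ => by omega, Finset.sum_empty, zero_div]

theorem memC_levelWeight {β : ℝ} {k : ℕ} (hn : (n : ℝ) = β * 2 ^ k) (hn₀ : 0 < n)
    (hsum : ∑ x, ((2 : ℝ) ^ e x)⁻¹ = 1) (M : ℕ) : memC β (levelWeight e M) k := by
  have hn₀' : (0 : ℝ) < n := by exact_mod_cast hn₀
  have hpart : ∀ m, ∑ i ∈ Finset.range m, levelWeight e M i ≤ 1 := by
    intro m
    unfold levelWeight
    rw [← Finset.sum_div, div_le_one hn₀']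
    calc ∑ i ∈ Finset.range m, ∑ x with min (e x) M = i, (2 : ℝ) ^ i / 2 ^ e x
        ≤ ∑ i ∈ Finset.range m, ∑ x with min (e x) M = i, (1 : ℝ) := by
          refine Finset.sum_le_sum fun i _ => Finset.sum_le_sum fun x hx => ?_
          have := (Finset.mem_filter.1 hx).2
          exact div_le_one_of_le₀ (pow_le_pow_right₀ one_le_two (by omega)) (by positivity)
      _ ≤ ∑ x : Fin n, (1 : ℝ) := Finset.sum_fiberwise_le_sum_of_sum_fiber_nonneg
          fun i _ => by positivity
      _ = n := by simp
  refine ⟨fun i => ⟨levelWeight_nonneg _ _ _, ?_⟩, ?_, hpart⟩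
  · exact (Finset.single_le_sum (fun j _ => levelWeight_nonneg e M j)
      (Finset.self_mem_range_succ i)).trans (hpart _)
  · rw [tsum_eq_sum (s := Finset.range (M + 1)) fun i hi => by
      rw [levelWeight_of_gt (by simpa using hi), zero_div]]
    have : ∀ i, levelWeight e M i / 2 ^ i
        = (∑ x with min (e x) M = i, ((2 : ℝ) ^ e x)⁻¹) / n := fun i => by
      unfold levelWeight
      rw [div_right_comm, Finset.sum_div]
      congr 1
      refine Finset.sum_congr rfl fun x _ => ?_
      field_simp
    simp_rw [this]
    rw [← Finset.sum_div, Finset.sum_fiberwise_of_maps_to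
      (fun x _ => Finset.mem_range.2 (Nat.lt_succ_of_le (min_le_right _ _))), hsum, hn]

/-- Halving sets built from all atoms above a threshold and prescribed numbers of atoms in
some levels below it. -/
theorem prod_choose_div_choose_le_rhoSpl (hμ : ∀ x, μ x = ((2 : ℝ) ^ e x)⁻¹)
    (hμ₁ : ∑ x, μ x = 1) {t : ℕ} {G : Finset ℕ} (hG : ∀ i ∈ G, t ≤ i) {y : ℕ → ℕ}
    (hy : ∀ i ∈ G, y i ≤ (Finset.univ.filter (e · = i)).card)
    (hmass : ∑ x with e x < t, μ x + ∑ i ∈ G, (y i : ℝ) * ((2 : ℝ) ^ i)⁻¹ = 1 / 2) :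
    ((∏ i ∈ G, (Finset.univ.filter (e · = i)).card.choose (y i) : ℕ) : ℝ)
      / n.choose ((Finset.univ.filter (e · < t)).card + ∑ i ∈ G, y i) ≤ rhoSpl n μ := by
  set N : ℕ → ℕ := fun i => (Finset.univ.filter (e · = i)).card with hN
  obtain ⟨R, hR₁, hR₂, hR₃⟩ : ∃ R, (∀ x, e x < R) ∧ (∀ i ∈ G, i < R) ∧ t ≤ R := by
    refine ⟨Finset.univ.sup e + G.sup id + t + 1, fun x => ?_, fun i hi => ?_, by omega⟩
    · have := Finset.le_sup (f := e) (Finset.mem_univ x)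
      omega
    · have := Finset.le_sup (f := id) hi
      simp only [id] at this
      omega
  set y' : ℕ → ℕ := fun i => if i < t then N i else if i ∈ G then y i else 0 with hy'
  have hyt : ∀ i < t, y' i = N i := fun i hi => if_pos hi
  have hyG : ∀ i ∈ G, y' i = y i := fun i hi => by
    simp only [hy', if_neg (hG i hi).not_gt, if_pos hi]
  have hy₀ : ∀ i, t ≤ i → i ∉ G → y' i = 0 := fun i hi hiG => by
    simp only [hy', if_neg hi.not_gt, if_neg hiG]
  have hsub : Finset.range t ∪ G ⊆ Finset.range R := by
    intro i hi
    rcases Finset.mem_union.1 hi with hi | hi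
    · exact Finset.mem_range.2 ((Finset.mem_range.1 hi).trans_le hR₃)
    · exact Finset.mem_range.2 (hR₂ i hi)
  have hdisj : Disjoint (Finset.range t) G := Finset.disjoint_left.2 fun i hi hiG =>
    (hG i hiG).not_gt (Finset.mem_range.1 hi)
  have hsumR : ∀ w : ℕ → ℝ, ∑ i ∈ Finset.range R, (y' i : ℝ) * w i
      = ∑ x with e x < t, w (e x) + ∑ i ∈ G, (y i : ℝ) * w i := by
    intro w
    rw [← Finset.sum_subset hsub fun i _ hi => ?_, Finset.sum_union hdisj,
      Finset.sum_congr rfl fun i hi => by rw [hyt i (Finset.mem_range.1 hi)],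
      Finset.sum_congr (s₁ := G) rfl fun i hi => by rw [hyG i hi]]
    · congr 1
      rw [sum_eq_sum_range_card_fiber_mul (R := t) (lev := e) (w := w) _
        (fun x hx => (Finset.mem_filter.1 hx).2) fun x _ => rfl]
      refine Finset.sum_congr rfl fun i hi => ?_
      simp only [hN, Finset.filter_filter]
      have hi := Finset.mem_range.1 hi
      congr 3
      ext x
      simp only [Finset.mem_filter, Finset.mem_univ, true_and]
      omega
    · rw [Finset.mem_union, not_or, Finset.mem_range, not_lt] at hi
      rw [hy₀ i hi.1 hi.2, Nat.cast_zero, zero_mul]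
  set S := Finset.univ.filter fun A : Finset (Fin n) =>
    ∀ i < R, (A.filter (e · = i)).card = y' i with hS
  have hcard : S.card = ∏ i ∈ G, (N i).choose (y i) := by
    rw [hS, card_filter_forall_lt_card_fiber_eq hR₁, ← Finset.prod_subset
      (Finset.subset_union_right.trans hsub) fun i _ hi => ?_]
    · exact Finset.prod_congr rfl fun i hi => by rw [hyG i hi]
    · by_cases hit : i < t
      · rw [hyt i hit, Nat.choose_self]
      · rw [hy₀ i (not_lt.1 hit) hi, Nat.choose_zero_right]
  rw [← hcard]
  have hcardA : ∀ A ∈ S, ∀ i ∈ Finset.range R, (A.filter (e · = i)).card = y' i :=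
    fun A hA i hi => (Finset.mem_filter.1 hA).2 i (Finset.mem_range.1 hi)
  refine card_div_choose_le_rhoSpl hμ₁ ?_ (fun A hA => ?_) fun A hA => ?_
  · rw [← Finset.card_pos, hcard]
    exact Finset.prod_pos fun i hi => Nat.choose_pos (hy i hi)
  · have h1 := hsumR fun _ => 1
    simp only [mul_one, Finset.sum_const, nsmul_eq_mul] at h1
    rw [card_eq_sum_range_card_fiber hR₁, Finset.sum_congr rfl (hcardA A hA)]
    exact_mod_cast h1
  · rw [← hmass, sum_eq_sum_range_card_fiber_mul A (fun x _ => hR₁ x)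
      (w := fun i => ((2 : ℝ) ^ i)⁻¹) fun x _ => hμ x,
      Finset.sum_congr rfl fun i hi => by rw [hcardA A hA i hi], hsumR]
    simp only [hμ]

/-- An entropy lower bound for `rhoSpl`. -/
theorem two_rpow_div_le_rhoSpl (hn : 0 < n) (hμ : ∀ x, μ x = ((2 : ℝ) ^ e x)⁻¹)
    (hμ₁ : ∑ x, μ x = 1) {t : ℕ} {G : Finset ℕ} (hG : ∀ i ∈ G, t ≤ i) {y : ℕ → ℕ}
    (hy : ∀ i ∈ G, y i ≤ (Finset.univ.filter (e · = i)).card)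
    (hmass : ∑ x with e x < t, μ x + ∑ i ∈ G, (y i : ℝ) * ((2 : ℝ) ^ i)⁻¹ = 1 / 2) {E : ℝ}
    (hE : E ≤ ∑ i ∈ G, ((Finset.univ.filter (e · = i)).card : ℝ) / n
        * binH (y i / (Finset.univ.filter (e · = i)).card)
      - binH (((Finset.univ.filter (e · < t)).card + ∑ i ∈ G, (y i : ℝ)) / n)) :
    2 ^ (n * E) / ((n : ℝ) + 1) ^ G.card ≤ rhoSpl n μ := by
  have hn' : (0 : ℝ) < n := by exact_mod_cast hn
  refine le_trans ?_ (prod_choose_div_choose_le_rhoSpl hμ hμ₁ hG hy hmass)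
  set N : ℕ → ℕ := fun i => (Finset.univ.filter (e · = i)).card with hN
  set s := (Finset.univ.filter (e · < t)).card + ∑ i ∈ G, y i with hs
  have hsn : s ≤ n := by
    have h1 : ∑ i ∈ G, N i ≤ (Finset.univ.filter fun x => ¬ e x < t).card := by
      rw [← Finset.card_biUnion]
      · refine Finset.card_le_card fun x hx => ?_
        obtain ⟨i, hi, hx⟩ := Finset.mem_biUnion.1 hx
        have := (Finset.mem_filter.1 hx).2
        have := hG i hi
        simp only [Finset.mem_filter, Finset.mem_univ, true_and]
        omega
      · intro i _ j _ hij
        exact Finset.disjoint_filter.2 fun x _ h1 h2 => hij (h1.symm.trans h2)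
    have h2 := Finset.card_filter_add_card_filter_not (s := (Finset.univ : Finset (Fin n)))
      (e · < t)
    rw [Finset.card_univ, Fintype.card_fin] at h2
    have h3 : ∑ i ∈ G, y i ≤ ∑ i ∈ G, N i := Finset.sum_le_sum hy
    omega
  have hchoose : (0 : ℝ) < n.choose s := by exact_mod_cast Nat.choose_pos hsn
  have hupper := choose_le_two_rpow hsn
  have hlower : 2 ^ (∑ i ∈ G, (N i : ℝ) * binH (y i / N i))
      ≤ ((n : ℝ) + 1) ^ G.card * ((∏ i ∈ G, (N i).choose (y i) : ℕ) : ℝ) := by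
    push_cast
    rw [Real.rpow_sum_of_pos two_pos, ← Finset.prod_const, ← Finset.prod_mul_distrib]
    refine Finset.prod_le_prod (fun i _ => by positivity) fun i hi => ?_
    refine (two_rpow_le_choose (hy i hi)).trans ?_
    refine mul_le_mul_of_nonneg_right ?_ (by positivity)
    have : N i ≤ n := by simpa using (Finset.univ.filter (e · = i)).card_le_univ
    have : (N i : ℝ) ≤ n := by exact_mod_cast this
    linarith
  have hexp : n * E + n * binH (s / n) ≤ ∑ i ∈ G, (N i : ℝ) * binH (y i / N i) := by
    have h1 : ∑ i ∈ G, (N i : ℝ) * binH (y i / N i)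
        = n * ∑ i ∈ G, (N i : ℝ) / n * binH (y i / N i) := by
      rw [Finset.mul_sum]
      refine Finset.sum_congr rfl fun i _ => ?_
      field_simp
    rw [h1, ← mul_add]
    refine mul_le_mul_of_nonneg_left ?_ hn'.le
    rw [hs]
    push_cast
    linarith
  rw [div_le_div_iff₀ (by positivity) hchoose]
  calc 2 ^ (n * E) * (n.choose s : ℝ) ≤ 2 ^ (n * E) * 2 ^ (n * binH (s / n)) := by gcongr
    _ = 2 ^ (n * E + n * binH (s / n)) := (Real.rpow_add two_pos _ _).symm
    _ ≤ 2 ^ (∑ i ∈ G, (N i : ℝ) * binH (y i / N i)) :=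
        Real.rpow_le_rpow_of_exponent_le one_le_two hexp
    _ ≤ _ := hlower
    _ = _ := mul_comm _ _

end Levels

section Proportions

variable {β : ℝ} {b : ℕ} {c α : ℕ → ℝ} {G : Finset ℕ}

theorem memC.sum_le_tsum_mul (h : memC β c b) {f : ℕ → ℝ} (hf : ∀ i, f i ∈ Set.Icc (0 : ℝ) 1) :
    ∑ i ∈ G, c i * f i ≤ ∑' i, f i * c i := by
  simp_rw [mul_comm (c _)]
  exact (h.summable_mul hf).sum_le_tsum G fun i _ => mul_nonneg (hf i).1 (h.1 i).1

theorem memC.tsum_mul_le (h : memC β c b) {f : ℕ → ℝ} (hf : ∀ i, f i ∈ Set.Icc (0 : ℝ) 1) {η : ℝ}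
    (htail : ∑' i, c i ≤ ∑ i ∈ G, c i + η) : ∑' i, f i * c i ≤ ∑ i ∈ G, c i * f i + η := by
  have h1 := h.sum_le_tsum_mul (G := G) (f := fun i => 1 - f i)
    fun i => ⟨by linarith [(hf i).2], by linarith [(hf i).1]⟩
  simp only [mul_sub, sub_mul, mul_one, one_mul, Finset.sum_sub_distrib] at h1
  rw [h.summable.tsum_sub (h.summable_mul hf)] at h1
  linarith

theorem memC.Pfun_le_entropyGap_add (h : memC β c b) (hα : ∀ i, α i ∈ Set.Icc (0 : ℝ) 1)
    {ε η : ℝ} (hmod : ∀ x ∈ Set.Icc (0 : ℝ) 1, ∀ y ∈ Set.Icc (0 : ℝ) 1,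
      |x - y| ≤ η → |binH x - binH y| ≤ ε)
    (htail : ∑' i, c i ≤ ∑ i ∈ G, c i + η) : Pfun c α ≤ entropyGap G c α + η + ε := by
  have h1 := h.tsum_mul_le (fun i => binH_mem_Icc (hα i)) htail
  have h2 := h.tsum_mul_le hα htail
  have h3 := h.sum_le_tsum_mul (G := G) hα
  have h4 := h.tsum_mul_mem_Icc hα
  have h5 : ∑ i ∈ G, c i * α i ∈ Set.Icc (0 : ℝ) 1 :=
    ⟨Finset.sum_nonneg fun i _ => mul_nonneg (h.1 i).1 (hα i).1, h3.trans h4.2⟩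
  have h6 := abs_le.1 (hmod _ h5 _ h4 (abs_le.2 ⟨by linarith, by linarith⟩))
  unfold Pfun entropyGap
  linarith [h6.2]

/-- Restricting a feasible `α` to finitely many indices and to a smaller total weight, while
keeping the proportions bounded away from one, costs little entropy. -/
theorem memC.exists_proportions (h : memC β c b) (hα : memA β b c α) {ε η : ℝ} (hη₀ : 0 < η)
    (hη₁ : η ≤ 1) (hε : 0 ≤ ε) (hmod : ∀ x ∈ Set.Icc (0 : ℝ) 1, ∀ y ∈ Set.Icc (0 : ℝ) 1,
      |x - y| ≤ η → |binH x - binH y| ≤ ε)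
    (htail : ∑' i, c i ≤ ∑ i ∈ G, c i + η) {r : ℝ} (hr₀ : 0 < r)
    (hr : r ≤ 1 / (β * 2 ^ b) / 2)
    (hmass : 1 / (β * 2 ^ b) / 2 + r ≤ ∑ i ∈ G, c i / 2 ^ i + η / 4 * (1 / (β * 2 ^ b))) :
    ∃ α' : ℕ → ℝ, (∀ i, 0 ≤ α' i ∧ α' i ≤ 1 - η / 4) ∧ ∑ i ∈ G, α' i * (c i / 2 ^ i) = r ∧
      Pfun c α - η - 3 * ε ≤ entropyGap G c α' := by
  set W := 1 / (β * 2 ^ b) with hW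
  have hc : ∀ i ∈ G, 0 ≤ c i := fun i _ => (h.1 i).1
  have hc₁ : ∑ i ∈ G, c i ≤ 1 :=
    (h.summable.sum_le_tsum G fun i _ => (h.1 i).1).trans h.tsum_le_one
  have hhalf : ∑' i, α i * c i / 2 ^ i = W / 2 := by
    rw [hα.2, hW, pow_succ, div_div, mul_assoc]
  have hrest : ∑ i ∈ G, c i / 2 ^ i - W / 2 ≤ ∑ i ∈ G, α i * (c i / 2 ^ i) := by
    have hf : ∀ i, 1 - α i ∈ Set.Icc (0 : ℝ) 1 := fun i =>
      ⟨by linarith [(hα.1 i).2], by linarith [(hα.1 i).1]⟩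
    have h1 := (h.summable_mul_div hf).sum_le_tsum G
      fun i _ => div_nonneg (mul_nonneg (hf i).1 (h.1 i).1) (by positivity)
    simp only [sub_mul, one_mul, sub_div, Finset.sum_sub_distrib] at h1
    rw [h.summable_div.tsum_sub (h.summable_mul_div hα.1), hhalf, h.2.1] at h1
    simp_rw [mul_div_assoc] at h1
    linarith
  set α₁ : ℕ → ℝ := fun i => (1 - η) * α i + 3 * η / 4 with hα₁
  have hα₁_mem : ∀ i, 0 ≤ α₁ i ∧ α₁ i ≤ 1 - η / 4 := fun i => by
    have h1 := hα.1 i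
    simp only [hα₁]
    constructor
    · nlinarith [h1.1]
    · nlinarith [h1.2]
  have hα₁_Icc : ∀ i ∈ G, α₁ i ∈ Set.Icc (0 : ℝ) 1 := fun i _ =>
    ⟨(hα₁_mem i).1, by linarith [(hα₁_mem i).2]⟩
  set a := ∑ i ∈ G, α₁ i * (c i / 2 ^ i) with ha
  have ha' : a = (1 - η) * ∑ i ∈ G, α i * (c i / 2 ^ i) + 3 * η / 4 * ∑ i ∈ G, c i / 2 ^ i := by
    simp only [ha, hα₁, add_mul, Finset.sum_add_distrib, Finset.mul_sum, mul_assoc]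
  have hra : r ≤ a := by
    have h1 := mul_le_mul_of_nonneg_left hrest (sub_nonneg.2 hη₁)
    have hWr : 0 ≤ W := by linarith
    nlinarith [mul_nonneg hη₀.le hWr, mul_nonneg (mul_nonneg hη₀.le hη₀.le) hWr]
  have ha₀ : 0 < a := hr₀.trans_le hra
  have hs : r / a ∈ Set.Icc (0 : ℝ) 1 := ⟨by positivity, (div_le_one ha₀).2 hra⟩
  refine ⟨fun i => r / a * α₁ i, fun i => ⟨mul_nonneg hs.1 (hα₁_mem i).1, ?_⟩, ?_, ?_⟩
  · exact (mul_le_of_le_one_left (hα₁_mem i).1 hs.2).trans (hα₁_mem i).2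
  · simp_rw [mul_assoc]
    rw [← Finset.mul_sum, ← ha, div_mul_cancel₀ _ ha₀.ne']
  · have h1 := h.Pfun_le_entropyGap_add hα.1 hmod htail
    have h2 := entropyGap_sub_le hη₀.le hε hmod hc hc₁ (fun i _ => hα.1 i) hα₁_Icc
      (fun i _ => by
        have := hα.1 i
        simp only [hα₁]
        rw [abs_le]
        constructor <;> nlinarith [this.1, this.2])
    have h3 := entropyGap_le_entropyGap_mul hs hc hc₁ hα₁_Icc
    linarith

/-- Integral rounding of proportions over a bounded window of levels, with the total dyadic weight
kept exactly. -/
theorem exists_rounding_of_window {t m : ℕ} (hGne : G.Nonempty) (hG : ∀ i ∈ G, t ≤ i ∧ i < t + m)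
    {N : ℕ → ℕ} {η : ℝ} (hα : ∀ i, 0 ≤ α i ∧ α i ≤ 1 - η / 4) (hη : 0 < η)
    (hN : ∀ i ∈ G, (4 * (m * 2 ^ m) : ℝ) ≤ N i * η) {z : ℤ}
    (hz : ∑ i ∈ G, α i * N i / 2 ^ i = z / 2 ^ t) :
    ∃ y : ℕ → ℕ, (∀ i ∈ G, y i ≤ N i) ∧ (∀ i ∈ G, |(y i : ℝ) / N i - α i| ≤ η) ∧
      ∑ i ∈ G, (y i : ℝ) / 2 ^ i = ∑ i ∈ G, α i * N i / 2 ^ i := by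
  obtain ⟨L, hL, hmax⟩ := G.exists_max_image id hGne
  have hm : 1 ≤ m := by have := hG L hL; omega
  have hB : (1 : ℝ) ≤ m * 2 ^ m :=
    one_le_mul_of_one_le_of_one_le (by exact_mod_cast hm) (one_le_pow₀ one_le_two)
  have hNpos : ∀ i ∈ G, (0 : ℝ) < N i := fun i hi => by
    by_contra! hle
    nlinarith [hN i hi]
  set f : ℕ → ℕ := fun i => ⌊α i * N i⌋₊ with hf
  have hf₁ : ∀ i, (f i : ℝ) ≤ α i * N i := fun i =>
    Nat.floor_le (mul_nonneg (hα i).1 (Nat.cast_nonneg _))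
  have hf₂ : ∀ i, α i * N i < f i + 1 := fun i => Nat.lt_floor_add_one _
  set Y : ℤ := z * 2 ^ (L - t) - ∑ i ∈ G.erase L, (f i : ℤ) * 2 ^ (L - i) with hYdef
  have hpow : ∀ i ≤ L, (2 : ℝ) ^ (L - i) = 2 ^ L / 2 ^ i := fun i hi => by
    rw [pow_sub₀ _ two_ne_zero hi, div_eq_mul_inv]
  have hY : (Y : ℝ) = α L * N L + ∑ i ∈ G.erase L, (α i * N i - f i) * 2 ^ (L - i) := by
    have h1 : ∑ i ∈ G, α i * N i * 2 ^ (L - i) = z * 2 ^ (L - t) := by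
      rw [hpow t (hG L hL).1]
      have h2 := congrArg (· * (2 : ℝ) ^ L) hz
      simp only [Finset.sum_mul] at h2
      rw [Finset.sum_congr rfl (g := fun i => α i * N i / 2 ^ i * 2 ^ L), h2]
      · ring
      · intro i hi
        rw [hpow i (hmax i hi)]
        ring
    rw [← Finset.add_sum_erase _ _ hL] at h1
    simp only [hYdef, sub_mul, Finset.sum_sub_distrib]
    push_cast
    rw [← h1]
    simp
    ring
  have hlow : α L * N L ≤ Y := by
    rw [hY]
    have : 0 ≤ ∑ i ∈ G.erase L, (α i * N i - f i) * (2 : ℝ) ^ (L - i) :=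
      Finset.sum_nonneg fun i _ => mul_nonneg (by linarith [hf₁ i]) (by positivity)
    linarith
  have hhigh : (Y : ℝ) ≤ α L * N L + m * 2 ^ m := by
    rw [hY]
    have hcard : G.card ≤ m := by
      have : G ⊆ Finset.Ico t (t + m) := fun i hi => Finset.mem_Ico.2 (hG i hi)
      simpa using Finset.card_le_card this
    have hcard' : ((G.erase L).card : ℝ) ≤ m := by
      exact_mod_cast (Finset.card_le_card (G.erase_subset L)).trans hcard
    have : ∑ i ∈ G.erase L, (α i * N i - f i) * (2 : ℝ) ^ (L - i)
        ≤ ∑ i ∈ G.erase L, (2 : ℝ) ^ m := by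
      refine Finset.sum_le_sum fun i hi => ?_
      have h1 := hG i (Finset.mem_of_mem_erase hi)
      have h2 := hG L hL
      have h3 : (2 : ℝ) ^ (L - i) ≤ 2 ^ m := pow_le_pow_right₀ one_le_two (by omega)
      calc (α i * N i - f i) * (2 : ℝ) ^ (L - i) ≤ 1 * 2 ^ (L - i) := by
            gcongr
            linarith [hf₂ i]
        _ ≤ 2 ^ m := by linarith
    rw [Finset.sum_const, nsmul_eq_mul] at this
    have h4 : ((G.erase L).card : ℝ) * 2 ^ m ≤ m * 2 ^ m := by gcongr
    linarith
  have hY₀ : 0 ≤ Y := by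
    have : (0 : ℝ) ≤ Y := (mul_nonneg (hα L).1 (Nat.cast_nonneg _)).trans hlow
    exact_mod_cast this
  lift Y to ℕ using hY₀ with y₀ hy₀
  push_cast at hlow hhigh hY
  refine ⟨fun i => if i = L then y₀ else f i, fun i hi => ?_, fun i hi => ?_, ?_⟩
  · dsimp only
    split_ifs with h
    · subst h
      have h1 := mul_le_mul_of_nonneg_right (hα i).2 (Nat.cast_nonneg (α := ℝ) (N i))
      have h2 : (y₀ : ℝ) ≤ N i := by nlinarith [hN i hi]
      exact_mod_cast h2
    · have h1 := mul_le_mul_of_nonneg_right (hα i).2 (Nat.cast_nonneg (α := ℝ) (N i))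
      have h2 : (f i : ℝ) ≤ N i := by nlinarith [hf₁ i, hN i hi]
      exact_mod_cast h2
  · have hp := hNpos i hi
    have key : ∀ y : ℝ, |y - α i * N i| ≤ N i * η → |y / N i - α i| ≤ η := fun y hy => by
      have : y / N i - α i = (y - α i * N i) / N i := by field_simp
      rw [this, abs_div, abs_of_pos hp, div_le_iff₀ hp]
      linarith
    dsimp only
    split_ifs with h
    · subst h
      refine key _ (abs_le.2 ⟨?_, ?_⟩) <;> nlinarith [hN i hi]
    · refine key _ (abs_le.2 ⟨?_, ?_⟩) <;> nlinarith [hN i hi, hf₁ i, hf₂ i]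
  · rw [← Finset.add_sum_erase _ _ hL, ← Finset.add_sum_erase _ (fun i => α i * N i / 2 ^ i) hL]
    have h1 : ∑ i ∈ G.erase L, (((if i = L then y₀ else f i : ℕ)) : ℝ) / 2 ^ i
        = ∑ i ∈ G.erase L, (f i : ℝ) / 2 ^ i :=
      Finset.sum_congr rfl fun i hi => by rw [if_neg (Finset.ne_of_mem_erase hi)]
    have h2 : ∑ i ∈ G.erase L, (α i * N i - f i) * (2 : ℝ) ^ (L - i)
        = 2 ^ L * (∑ i ∈ G.erase L, α i * N i / 2 ^ i - ∑ i ∈ G.erase L, (f i : ℝ) / 2 ^ i) := by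
      rw [← Finset.sum_sub_distrib, Finset.mul_sum]
      refine Finset.sum_congr rfl fun i hi => ?_
      rw [hpow i (hmax i (Finset.mem_of_mem_erase hi))]
      field_simp
    dsimp only
    rw [h1, if_pos rfl, hY, h2]
    field_simp
    ring

end Proportions

section LowerBound

variable {n : ℕ} {μ : Fin n → ℝ} {e : Fin n → ℕ}

theorem card_filter_lt_le_two_pow (hμ : ∀ x, μ x = ((2 : ℝ) ^ e x)⁻¹) (hμ₁ : ∑ x, μ x = 1)
    (t : ℕ) : ((Finset.univ.filter (e · < t)).card : ℝ) ≤ 2 ^ t := by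
  have h1 : ∑ x with e x < t, ((2 : ℝ) ^ t)⁻¹ ≤ ∑ x, μ x :=
    calc ∑ x with e x < t, ((2 : ℝ) ^ t)⁻¹ ≤ ∑ x with e x < t, μ x := by
          refine Finset.sum_le_sum fun x hx => ?_
          rw [hμ]
          exact inv_anti₀ (by positivity)
            (pow_le_pow_right₀ one_le_two (Finset.mem_filter.1 hx).2.le)
      _ ≤ ∑ x, μ x := Finset.sum_le_sum_of_subset_of_nonneg (Finset.filter_subset _ _)
          fun x _ _ => by
            rw [hμ]
            positivity
  rw [hμ₁, Finset.sum_const, nsmul_eq_mul, ← div_eq_mul_inv, div_le_one (by positivity)] at h1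
  exact h1

theorem sum_range_levelWeight_mul {t M : ℕ} (htM : t ≤ M) (f : ℕ → ℝ) :
    ∑ i ∈ Finset.range t, levelWeight e M i * f i = (∑ x with e x < t, f (e x)) / n := by
  have h1 : ∑ i ∈ Finset.range t, levelWeight e M i * f i
      = ∑ i ∈ Finset.range t, (∑ x with e x = i, f (e x)) / n := by
    refine Finset.sum_congr rfl fun i hi => ?_
    rw [levelWeight_of_lt ((Finset.mem_range.1 hi).trans_le htM), Finset.sum_congr rfl
      fun x hx => by rw [(Finset.mem_filter.1 hx).2], Finset.sum_const, nsmul_eq_mul]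
    ring
  rw [h1, ← Finset.sum_div]
  congr 1
  rw [← Finset.sum_fiberwise_of_maps_to (s := Finset.univ.filter (e · < t)) (t := Finset.range t)
    (g := e) (by simp)]
  refine Finset.sum_congr rfl fun i hi => Finset.sum_congr ?_ fun _ _ => rfl
  have := Finset.mem_range.1 hi
  ext x
  simp only [Finset.mem_filter, Finset.mem_univ, true_and]
  omega

theorem sum_range_levelWeight {t M : ℕ} (htM : t ≤ M) :
    ∑ i ∈ Finset.range t, levelWeight e M i
      = ((Finset.univ.filter (e · < t)).card : ℝ) / n := by
  simpa using sum_range_levelWeight_mul (e := e) htM fun _ => 1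

/-- The levels in `[t, M)` that have at least `C` atoms. -/
def heavyLevels (e : Fin n → ℕ) (t M C : ℕ) : Finset ℕ :=
  (Finset.Ico t M).filter fun i => C ≤ (Finset.univ.filter (e · = i)).card

theorem tsum_levelWeight_mul_le {t M C m : ℕ} (hn : 0 < n) (htM : t ≤ M) (hMt : M ≤ t + m)
    {f : ℕ → ℝ} (hf₀ : ∀ i, 0 ≤ f i) (hf : ∀ i, t ≤ i → f i ≤ f t) :
    ∑' i, levelWeight e M i * f i ≤ ∑ i ∈ Finset.range t, levelWeight e M i * f i
      + ∑ i ∈ heavyLevels e t M C, levelWeight e M i * f i + m * C / n * f t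
      + levelWeight e M M * f M := by
  have hn' : (0 : ℝ) < n := by exact_mod_cast hn
  rw [tsum_eq_sum (s := Finset.range (M + 1)) fun i hi => by
    rw [levelWeight_of_gt (by simpa using hi), zero_mul], Finset.sum_range_succ,
    ← Finset.sum_range_add_sum_Ico _ htM, ← Finset.sum_filter_add_sum_filter_not (Finset.Ico t M)
      fun i => C ≤ (Finset.univ.filter (e · = i)).card]
  have hlight : ∑ i ∈ (Finset.Ico t M).filter
      fun i => ¬ C ≤ (Finset.univ.filter (e · = i)).card, levelWeight e M i * f i
      ≤ m * C / n * f t := by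
    calc _ ≤ ∑ i ∈ (Finset.Ico t M).filter
            fun i => ¬ C ≤ (Finset.univ.filter (e · = i)).card, (C / n * f t : ℝ) := by
          refine Finset.sum_le_sum fun i hi => ?_
          obtain ⟨h1, h2⟩ := Finset.mem_filter.1 hi
          rw [Finset.mem_Ico] at h1
          rw [levelWeight_of_lt h1.2]
          have h3 : ((Finset.univ.filter (e · = i)).card : ℝ) ≤ C := by
            exact_mod_cast (not_le.1 h2).le
          exact mul_le_mul (by gcongr) (hf i h1.1) (hf₀ i) (by positivity)
      _ ≤ m * (C / n * f t) := by
          rw [Finset.sum_const, nsmul_eq_mul]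
          refine mul_le_mul_of_nonneg_right ?_ (mul_nonneg (by positivity) (hf₀ t))
          have h1 := Finset.card_filter_le (Finset.Ico t M)
            fun i => ¬ C ≤ (Finset.univ.filter (e · = i)).card
          rw [Nat.card_Ico] at h1
          exact_mod_cast (by omega)
      _ = _ := by ring
  unfold heavyLevels
  linarith

/-- The lower bound for a single distribution, with explicit parameters. -/
theorem two_rpow_le_rhoSpl {β : ℝ} (hβ : β ∈ Set.Ico (1 : ℝ) 2) {j t K C : ℕ}
    (hn : (n : ℝ) = β * 2 ^ (t + j)) (he : ∀ x, 1 ≤ e x) (hμ : ∀ x, μ x = ((2 : ℝ) ^ e x)⁻¹)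
    (hμ₁ : ∑ x, μ x = 1) {ε η : ℝ} (hη₀ : 0 < η) (hη₁ : η ≤ 1) (hηε : η ≤ ε)
    (hmod : ∀ x ∈ Set.Icc (0 : ℝ) 1, ∀ y ∈ Set.Icc (0 : ℝ) 1,
      |x - y| ≤ η → |binH x - binH y| ≤ ε)
    (ht : 1 ≤ t) (hK₀ : 0 < K) (hj : ((2 : ℝ) ^ j)⁻¹ ≤ η / 4) (hK : 4 / (K : ℝ) ≤ η / 8)
    (hC : 4 * (((K + j : ℕ) : ℝ) * 2 ^ (K + j)) ≤ C * η)
    (htC : ((K + j : ℕ) : ℝ) * C ≤ η / 8 * 2 ^ t)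
    (hpoly : ((n : ℝ) + 1) ^ (K + j) ≤ 2 ^ (ε * n)) :
    2 ^ ((Gfun β - 9 * ε) * n) ≤ rhoSpl n μ := by
  have hε : 0 < ε := hη₀.trans_le hηε
  have hβ₀ : (0 : ℝ) < β := by linarith [hβ.1]
  have hn' : (0 : ℝ) < n := by
    rw [hn]
    positivity
  have hn₀ : 0 < n := by exact_mod_cast hn'
  obtain ⟨M, hkM, hMk, hM⟩ := exists_truncation_level e (t + j) hK₀
  have htM : t ≤ M := by omega
  set m := K + j with hm
  set N : ℕ → ℕ := fun i => (Finset.univ.filter (e · = i)).card with hN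
  set c := levelWeight e M with hc
  set G := heavyLevels e t M C with hG
  set T := Finset.univ.filter (e · < t) with hT
  have hmemG : ∀ i ∈ G, (t ≤ i ∧ i < M) ∧ C ≤ N i := fun i hi => by
    simpa [hG, heavyLevels] using hi
  have hcG : ∀ i ∈ G, c i = N i / n := fun i hi => levelWeight_of_lt (hmemG i hi).1.2
  have h : memC β c (t + j) := memC_levelWeight hn hn₀ (by simpa only [hμ] using hμ₁) M
  have hcM : c M ≤ 2 / K := by
    rw [hc, levelWeight_self, div_le_iff₀ hn']
    exact hM.trans (le_of_eq (by ring))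
  have htn : (2 : ℝ) ^ t * 2 ^ j ≤ n := by
    rw [hn, pow_add]
    exact le_mul_of_one_le_left (by positivity) hβ.1
  have hTn : (T.card : ℝ) / n ≤ η / 4 := by
    refine le_trans ?_ hj
    rw [div_le_iff₀ hn', inv_mul_eq_div, le_div_iff₀ (by positivity)]
    have := card_filter_lt_le_two_pow hμ hμ₁ t
    calc (T.card : ℝ) * 2 ^ j ≤ 2 ^ t * 2 ^ j := by gcongr
      _ ≤ n := htn
  have htail : ∑' i, c i ≤ T.card / n + ∑ i ∈ G, c i + η / 4 := by
    have h1 := tsum_levelWeight_mul_le (e := e) (C := C) (m := m) hn₀ htM (by omega)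
      (f := fun _ => 1) (by simp) (by simp)
    simp only [mul_one] at h1
    rw [sum_range_levelWeight htM] at h1
    have h2 : (m : ℝ) * C / n ≤ η / 8 := by
      rw [div_le_iff₀ hn']
      refine htC.trans (mul_le_mul_of_nonneg_left ?_ (by positivity))
      exact (le_mul_of_one_le_right (by positivity) (one_le_pow₀ one_le_two)).trans htn
    have h3 : 4 / (K : ℝ) = 2 * (2 / K) := by ring
    linarith
  have htail' : ∑' i, c i ≤ ∑ i ∈ G, c i + η := by linarith
  have hc₀ : ∀ i ∈ G, 0 ≤ c i := fun i _ => (h.1 i).1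
  have hc₁' : (T.card : ℝ) / n + ∑ i ∈ G, c i ≤ 1 := by
    rw [← sum_range_levelWeight (e := e) htM, ← Finset.sum_union]
    · exact (h.summable.sum_le_tsum _ fun i _ => (h.1 i).1).trans h.tsum_le_one
    · rw [Finset.disjoint_left]
      intro i hi hiG
      have := (hmemG i hiG).1.1
      rw [Finset.mem_range] at hi
      omega
  have hTn₀ : (0 : ℝ) ≤ T.card / n := by positivity
  have hc₁ : ∑ i ∈ G, c i ≤ 1 := by linarith
  obtain ⟨α, hα, hPα⟩ := h.exists_Gfun_sub_lt_Pfun hε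
  rcases le_or_gt (1 / 2) (∑ x ∈ T, μ x) with hhalf | hhalf
  · obtain ⟨A, hAT, hA⟩ := exists_subset_sum_eq_half he hμ T hhalf
    have h1 := card_div_choose_le_rhoSpl (s := A.card) hμ₁ (Finset.singleton_nonempty A)
      (by simp) (by simpa using hA)
    refine le_trans ?_ h1
    have hAn : A.card ≤ n := by simpa using A.card_le_univ
    have hpos : (0 : ℝ) < n.choose A.card := by exact_mod_cast Nat.choose_pos hAn
    have hgap := h.Pfun_le_entropyGap_add hα.1 hmod htail'
    have hnonpos := entropyGap_nonpos hc₀ hc₁ fun i _ => hα.1 i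
    have hbin : binH (A.card / n) ≤ ε := by
      have h2 : (A.card : ℝ) / n ≤ η := by
        have : (A.card : ℝ) / n ≤ T.card / n := by gcongr
        linarith
      have h3 : (0 : ℝ) ≤ A.card / n := by positivity
      have h4 := hmod _ ⟨h3, h2.trans hη₁⟩ 0 (by simp) (by rwa [sub_zero, abs_of_nonneg h3])
      rw [binH_zero, sub_zero] at h4
      exact (le_abs_self _).trans h4
    rw [Finset.card_singleton, Nat.cast_one, le_div_iff₀ hpos]
    calc 2 ^ ((Gfun β - 9 * ε) * n) * (n.choose A.card : ℝ)
        ≤ 2 ^ ((Gfun β - 9 * ε) * n) * 2 ^ (n * binH (A.card / n)) := by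
          gcongr
          exact choose_le_two_rpow hAn
      _ = 2 ^ ((Gfun β - 9 * ε) * n + n * binH (A.card / n)) :=
          (Real.rpow_add two_pos _ _).symm
      _ ≤ 1 := Real.rpow_le_one_of_one_le_of_nonpos one_le_two (by nlinarith)
  have hW : 1 / (β * 2 ^ (t + j)) = 1 / (n : ℝ) := by rw [hn]
  have hmassT : ∑ i ∈ Finset.range t, c i / 2 ^ i = (∑ x ∈ T, μ x) / n := by
    have h1 := sum_range_levelWeight_mul (e := e) htM fun i => ((2 : ℝ) ^ i)⁻¹
    simp only [← hμ] at h1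
    simp only [div_eq_mul_inv] at h1 ⊢
    exact h1
  have hmass : 1 / (n : ℝ)
      ≤ (∑ x ∈ T, μ x) / n + ∑ i ∈ G, c i / 2 ^ i + η / 4 * (1 / n) := by
    have h1 := tsum_levelWeight_mul_le (e := e) (C := C) (m := m) hn₀ htM (by omega)
      (f := fun i => ((2 : ℝ) ^ i)⁻¹) (by simp)
      fun i hi => inv_anti₀ (by positivity) (pow_le_pow_right₀ one_le_two hi)
    simp only [← div_eq_mul_inv] at h1
    rw [h.2.1, hW, hmassT] at h1
    have h2 : (m : ℝ) * C / n / 2 ^ t ≤ η / 8 * (1 / n) := by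
      rw [div_div, div_le_iff₀ (by positivity)]
      calc (m : ℝ) * C ≤ η / 8 * 2 ^ t := htC
        _ = _ := by field_simp
    have h3 : c M / 2 ^ M ≤ η / 8 * (1 / n) := by
      rw [div_le_iff₀ (by positivity)]
      have h4 : (n : ℝ) ≤ 2 * 2 ^ M := by
        rw [hn]
        exact mul_le_mul hβ.2.le (pow_le_pow_right₀ one_le_two hkM) (by positivity) two_pos.le
      have h5 : 4 / (K : ℝ) = 2 * (2 / K) := by ring
      have h6 : c M ≤ η / 16 := by linarith
      calc c M ≤ η / 16 := h6
        _ = η / 16 * (1 / n) * n := by field_simp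
        _ ≤ η / 16 * (1 / n) * (2 * 2 ^ M) := by gcongr
        _ = _ := by ring
    linarith
  obtain ⟨α', hα', hsum, hgap⟩ := h.exists_proportions hα hη₀ hη₁ hε.le hmod htail'
    (r := (1 / 2 - ∑ x ∈ T, μ x) / n) (div_pos (by linarith) hn')
    (by
      rw [hW, div_div, mul_comm, ← div_div]
      have : 0 ≤ ∑ x ∈ T, μ x := Finset.sum_nonneg fun x _ => by
        rw [hμ]
        positivity
      gcongr
      linarith)
    (by
      rw [hW, sub_div]
      have : 1 / (n : ℝ) / 2 = 1 / 2 / n := by ring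
      have : 1 / (n : ℝ) = 1 / 2 / n + 1 / 2 / n := by ring
      linarith)
  have hGne : G.Nonempty := by
    by_contra hne
    rw [Finset.not_nonempty_iff_eq_empty.1 hne, Finset.sum_empty] at hsum
    have : 0 < (1 / 2 - ∑ x ∈ T, μ x) / n := div_pos (by linarith) hn'
    linarith
  have hsumN : ∑ i ∈ G, α' i * N i / 2 ^ i = 1 / 2 - ∑ x ∈ T, μ x := by
    rw [eq_div_iff hn'.ne', Finset.sum_mul] at hsum
    rw [← hsum]
    refine Finset.sum_congr rfl fun i hi => ?_
    rw [hcG i hi]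
    field_simp
  have h_int : 1 / 2 - ∑ x ∈ T, μ x
      = ((2 ^ (t - 1) - ∑ x ∈ T, 2 ^ (t - e x) : ℤ) : ℝ) / 2 ^ t := by
    push_cast
    rw [sub_div, Finset.sum_div]
    congr 1
    · rw [pow_sub₀ _ two_ne_zero ht]
      field_simp
    · refine Finset.sum_congr rfl fun x hx => ?_
      rw [hμ, pow_sub₀ _ two_ne_zero (Finset.mem_filter.1 hx).2.le]
      field_simp
  obtain ⟨y, hyN, hyα, hysum⟩ := exists_rounding_of_window (m := m) hGne
    (fun i hi => ⟨(hmemG i hi).1.1, by have := (hmemG i hi).1.2; omega⟩) hα' hη₀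
    (fun i hi => hC.trans (mul_le_mul_of_nonneg_right
      (by exact_mod_cast (hmemG i hi).2) hη₀.le)) (hsumN.trans h_int)
  have hyIcc : ∀ i ∈ G, (y i : ℝ) / N i ∈ Set.Icc (0 : ℝ) 1 := fun i hi =>
    ⟨by positivity, div_le_one_of_le₀ (by exact_mod_cast hyN i hi) (by positivity)⟩
  have hgap' := entropyGap_sub_le hη₀.le hε.le hmod hc₀ hc₁
    (fun i _ => ⟨(hα' i).1, by linarith [(hα' i).2]⟩) hyIcc
    fun i hi => by rw [abs_sub_comm]; exact hyα i hi
  have hcy : ∑ i ∈ G, c i * ((y i : ℝ) / N i) = (∑ i ∈ G, (y i : ℝ)) / n := by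
    rw [Finset.sum_div]
    refine Finset.sum_congr rfl fun i hi => ?_
    rw [hcG i hi]
    rcases Nat.eq_zero_or_pos (N i) with h0 | h0
    · have := hyN i hi
      have : y i = 0 := by omega
      simp [this]
    · have : (0 : ℝ) < N i := by exact_mod_cast h0
      field_simp
  have hyT := sum_mul_mem_Icc hc₀ hc₁ hyIcc
  have hyc : ∑ i ∈ G, c i * ((y i : ℝ) / N i) ≤ ∑ i ∈ G, c i :=
    Finset.sum_le_sum fun i hi => mul_le_of_le_one_right (hc₀ i hi) (hyIcc i hi).2
  have hbin := hmod (((T.card : ℝ) + ∑ i ∈ G, (y i : ℝ)) / n)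
    (by
      rw [add_div, ← hcy]
      exact ⟨by linarith [hyT.1], by linarith⟩) _ hyT
    (by
      rw [hcy, add_div, add_sub_cancel_right, abs_of_nonneg hTn₀]
      linarith)
  have hE : Gfun β - 8 * ε ≤ ∑ i ∈ G, (N i : ℝ) / n * binH (y i / N i)
      - binH ((T.card + ∑ i ∈ G, (y i : ℝ)) / n) := by
    have h1 : ∑ i ∈ G, (N i : ℝ) / n * binH (y i / N i) = ∑ i ∈ G, c i * binH (y i / N i) :=
      Finset.sum_congr rfl fun i hi => by rw [hcG i hi]
    rw [h1]
    have h2 := (abs_le.1 hbin).2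
    unfold entropyGap at hgap hgap'
    linarith
  have hlower := two_rpow_div_le_rhoSpl hn₀ hμ hμ₁ (fun i hi => (hmemG i hi).1.1) hyN
    (by
      simp only [← div_eq_mul_inv]
      rw [hysum, hsumN]
      ring) hE
  refine le_trans ?_ hlower
  have hcard : G.card ≤ m := by
    have := (Finset.card_filter_le (Finset.Ico t M) fun i => C ≤ N i)
    rw [Nat.card_Ico] at this
    exact this.trans (by omega)
  rw [le_div_iff₀ (by positivity)]
  calc 2 ^ ((Gfun β - 9 * ε) * n) * ((n : ℝ) + 1) ^ G.card
      ≤ 2 ^ ((Gfun β - 9 * ε) * n) * 2 ^ (ε * n) := by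
        gcongr
        exact (pow_le_pow_right₀ (by linarith) hcard).trans hpoly
    _ = 2 ^ ((Gfun β - 9 * ε) * n + ε * n) := (Real.rpow_add two_pos _ _).symm
    _ = 2 ^ (n * (Gfun β - 8 * ε)) := by
        congr 1
        ring

/-- A uniform lower bound for `rhoSpl` over all full-support dyadic distributions. -/
theorem exists_forall_two_rpow_le_rhoSpl {β : ℝ} (hβ : β ∈ Set.Ico (1 : ℝ) 2) {ε : ℝ}
    (hε : 0 < ε) :
    ∃ K₀ : ℕ, ∀ k : ℕ, K₀ ≤ k → ∀ n : ℕ, (n : ℝ) = β * 2 ^ k → ∀ μ : Fin n → ℝ,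
      IsDyadicDist n μ → (∀ i, 0 < μ i) → (2 : ℝ) ^ ((Gfun β - ε) * n) ≤ rhoSpl n μ := by
  obtain ⟨δ, hδ, hmod⟩ := exists_modulus_binH (ε := ε / 9) (by positivity)
  obtain ⟨η, hη₀, hη⟩ : ∃ η, 0 < η ∧ η ≤ min (min 1 (ε / 9)) δ := ⟨_, by positivity, le_rfl⟩
  obtain ⟨⟨hη₁, hηε⟩, hηδ⟩ := by simpa only [le_min_iff] using hη
  obtain ⟨j, hj⟩ := exists_pow_lt_of_lt_one (show 0 < η / 4 by positivity)
    (show (2 : ℝ)⁻¹ < 1 by norm_num)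
  rw [inv_pow] at hj
  obtain ⟨K, hK⟩ := exists_nat_gt (32 / η)
  have hK' : (0 : ℝ) < K := lt_trans (by positivity) hK
  obtain ⟨C, hC⟩ := exists_nat_gt (4 * (((K + j : ℕ) : ℝ) * 2 ^ (K + j)) / η)
  obtain ⟨t₀, ht₀⟩ := pow_unbounded_of_one_lt (((K + j : ℕ) : ℝ) * C / (η / 8))
    (one_lt_two (α := ℝ))
  obtain ⟨n₀, hn₀⟩ := exists_pow_le_two_rpow (K + j) (ε := ε / 9) (by positivity)
  refine ⟨t₀ + 1 + j + n₀, fun k hk n hn μ hdist hpos => ?_⟩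
  choose e he using fun x => (hdist.2.2 x).resolve_left (hpos x).ne'
  obtain ⟨t, rfl⟩ : ∃ t, k = t + j := ⟨k - j, by omega⟩
  have hnk : n₀ ≤ n := by
    have h1 : ((2 ^ (t + j) : ℕ) : ℝ) ≤ n := by
      rw [hn]
      push_cast
      exact le_mul_of_one_le_left (by positivity) hβ.1
    have h2 : 2 ^ (t + j) ≤ n := by exact_mod_cast h1
    have h3 := Nat.lt_two_pow_self (n := t + j)
    omega
  have := two_rpow_le_rhoSpl (K := K) (C := C) hβ hn (fun x => (he x).1) (fun x => (he x).2)
    hdist.2.1 hη₀ hη₁ hηε (fun x hx y hy hxy => hmod x hx y hy (hxy.trans hηδ)) (by omega)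
    (by exact_mod_cast hK') hj.le
    (by
      rw [div_lt_iff₀ hη₀] at hK
      rw [div_le_iff₀ hK']
      linarith)
    (by
      rw [div_lt_iff₀ hη₀] at hC
      exact hC.le)
    (by
      rw [div_lt_iff₀ (by positivity)] at ht₀
      have : (2 : ℝ) ^ t₀ ≤ 2 ^ t := pow_le_pow_right₀ one_le_two (by omega)
      nlinarith)
    (hn₀ n hnk)
  rwa [mul_div_cancel₀ _ (by norm_num)] at this

end LowerBound

/-- Along the sequence `n = β·2^k`, `ρ_min(n) = 2^{G(β)·n ± o(n)}`. -/
theorem rhoMin_eq_two_pow_G (β : ℝ) (hβ : β ∈ Set.Ico (1 : ℝ) 2) :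
    ∀ ε > (0 : ℝ), ∃ K : ℕ, ∀ k : ℕ, K ≤ k → ∀ n : ℕ, (n : ℝ) = β * 2 ^ k →
      (2 : ℝ) ^ ((Gfun β - ε) * n) ≤ rhoMin n ∧
      rhoMin n ≤ (2 : ℝ) ^ ((Gfun β + ε) * n) := by
  intro ε hε
  obtain ⟨K₁, hK₁⟩ := exists_dist_rhoSpl_le hβ.1 hε
  obtain ⟨K₂, hK₂⟩ := exists_forall_two_rpow_le_rhoSpl hβ hε
  refine ⟨max K₁ K₂, fun k hk n hn => ?_⟩
  obtain ⟨μ, hμ, hpos, hne, hle⟩ := hK₁ k (le_of_max_le_left hk) n hn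
  constructor
  · refine le_csInf ⟨_, μ, hμ, hpos, hne, rfl⟩ ?_
    rintro _ ⟨ν, hν, hν₀, -, rfl⟩
    exact hK₂ k (le_of_max_le_right hk) n hn ν hν hν₀
  · refine le_trans (csInf_le ⟨0, ?_⟩ ⟨μ, hμ, hpos, hne, rfl⟩) hle
    rintro _ ⟨ν, -, -, -, rfl⟩
    exact rhoSpl_nonneg n ν
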